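/- arXiv:2205.09686 — 2 statements merged into one kernel-verified Lean document; each statement's English description precedes it below -/
import Mathlib

section
/- For all integers r ≥ 1 and s ≥ 1, the generating function Σ_{n≥0} |D_n^{r,s}| x^n equals x^{r+s}·(1 + x·m(x))^{r+s-2}·( 1 + x^2·(x·m(x))′ ), where m(x) = Σ_{n≥0} M_n x^n and ′ denotes the formal derivative of formal power series. -/
/-- A Dyck path of semilength `n`, encoded as a word on `Bool`
(`true` = up step `u`, `false` = down step `d`). -/
def IsDyckWord (n : ℕ) (w : List Bool) : Prop :=
  w.length = 2 * n ∧ w.count true = n ∧ w.count false = n ∧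
    ∀ p : List Bool, p <+: w → p.count false ≤ p.count true

/-- The (0-based) indices of the up steps of `w`. -/
def upIdxs (w : List Bool) : List ℕ := w.findIdxs (· == true)

/-- The (0-based) indices of the down steps of `w`. -/
def downIdxs (w : List Bool) : List ℕ := w.findIdxs (· == false)

/-- `rStat w i` is the number of `d`'s strictly between the `i`-th and the
`(i+1)`-st `u` of `w` (with `i` 1-indexed). -/
def rStat (w : List Bool) (i : ℕ) : ℕ :=
  ((w.take ((upIdxs w).getD i 0)).drop ((upIdxs w).getD (i - 1) 0 + 1)).count false

/-- `sStat w i` is the number of `u`'s strictly between the `i`-th and the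
`(i+1)`-st `d` of `w` (with `i` 1-indexed). -/
def sStat (w : List Bool) (i : ℕ) : ℕ :=
  ((w.take ((downIdxs w).getD i 0)).drop ((downIdxs w).getD (i - 1) 0 + 1)).count true

/-- The statistic `L(D) = ∏_{i=1}^{n-1} C(r_i + s_i, r_i)` of a Dyck path of semilength `n`. -/
def LStat (n : ℕ) (w : List Bool) : ℕ :=
  ∏ i ∈ Finset.Icc 1 (n - 1), Nat.choose (rStat w i + sStat w i) (rStat w i)

/-- `dyckL n k` = the set `𝒟ₙᵏ` of Dyck paths of semilength `n` with `L(D) = k`. -/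
def dyckL (n k : ℕ) : Set (List Bool) := {w | IsDyckWord n w ∧ LStat n w = k}

/-- A Motzkin path, encoded as a word on `Option Bool`
(`some true` = up, `some false` = down, `none` = horizontal). -/
def IsMotzkinWord (w : List (Option Bool)) : Prop :=
  w.count (some false) = w.count (some true) ∧
    ∀ p : List (Option Bool), p <+: w → p.count (some false) ≤ p.count (some true)

/-- `motzkin n` = the `n`-th Motzkin number `Mₙ`, the number of Motzkin paths of length `n`. -/
noncomputable def motzkin (n : ℕ) : ℕ :=
  {w : List (Option Bool) | w.length = n ∧ IsMotzkinWord w}.ncard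

/-- The Motzkin ballot number `T_{n,k}`: the number of Motzkin paths of length `n`
whose first down step is in position `k` (1-indexed); by convention `T_{k-1,k} = 1`,
counting the path of `k-1` horizontal steps. -/
noncomputable def motzkinBallot (n k : ℕ) : ℕ :=
  if n + 1 = k then 1
  else
    {w : List (Option Bool) | w.length = n ∧ IsMotzkinWord w ∧
      w.getD (k - 1) none = some false ∧ ∀ j < k - 1, w.getD j none ≠ some false}.ncard

/-- Motzkin numbers with integer index: `Mᵢ = 0` for `i < 0`. -/
noncomputable def motzkinZ (i : ℤ) : ℤ := if 0 ≤ i then (motzkin i.toNat : ℤ) else 0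

/-- Motzkin ballot numbers with integer first index: `T_{n,k} = 0` for `n < 0`. -/
noncomputable def motzkinBallotZ (n : ℤ) (k : ℕ) : ℤ :=
  if 0 ≤ n then (motzkinBallot n.toNat k : ℤ) else 0

/-- The set of returns of a Dyck path `w` of semilength `n`:
indices `1 ≤ k ≤ n` such that the path touches the `x`-axis after `2k` steps. -/
def returns (n : ℕ) (w : List Bool) : Finset ℕ :=
  (Finset.Icc 1 n).filter fun k => (w.take (2 * k)).count false = (w.take (2 * k)).count true

/-- `dyckRS n r s` = the set `𝒟ₙ^{r,s}` of Dyck paths of semilength `n` having exactly one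
index `i` with `rᵢ > 0` and `sᵢ > 0`, and such that at that index `rᵢ = r` and `sᵢ = s`. -/
def dyckRS (n r s : ℕ) : Set (List Bool) :=
  {w | IsDyckWord n w ∧ ∃ i ∈ Finset.Icc 1 (n - 1),
    (0 < rStat w i ∧ 0 < sStat w i) ∧ rStat w i = r ∧ sStat w i = s ∧
      ∀ j ∈ Finset.Icc 1 (n - 1), 0 < rStat w j ∧ 0 < sStat w j → j = i}

/-- `twoStars n w k₁ k₂` says that `k₁ < k₂` are exactly the two indices `i` of `w`
with `rᵢ > 0` and `sᵢ > 0`. -/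
def twoStars (n : ℕ) (w : List Bool) (k₁ k₂ : ℕ) : Prop :=
  k₁ ∈ Finset.Icc 1 (n - 1) ∧ k₂ ∈ Finset.Icc 1 (n - 1) ∧ k₁ < k₂ ∧
    (0 < rStat w k₁ ∧ 0 < sStat w k₁) ∧ (0 < rStat w k₂ ∧ 0 < sStat w k₂) ∧
    ∀ j ∈ Finset.Icc 1 (n - 1), 0 < rStat w j ∧ 0 < sStat w j → j = k₁ ∨ j = k₂

/-- `xStat w k` = the number of indices `i < k` with `rᵢ = 0` and `sᵢ > 0`. -/
def xStat (w : List Bool) (k : ℕ) : ℕ :=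
  ((Finset.Ico 1 k).filter fun i => rStat w i = 0 ∧ 0 < sStat w i).card

/-- `yStat w k` = the number of indices `i < k` with `rᵢ > 0` and `sᵢ = 0`. -/
def yStat (w : List Bool) (k : ℕ) : ℕ :=
  ((Finset.Ico 1 k).filter fun i => 0 < rStat w i ∧ sStat w i = 0).card

/-- The generating function `m(x) = Σ Mₙ xⁿ` of the Motzkin numbers, over `ℚ`. -/
noncomputable def motzkinGF : PowerSeries ℚ := PowerSeries.mk fun n => (motzkin n : ℚ)

/-!
Record for `1 ≤ i < n` the pair of bits `([rᵢ > 0], [sᵢ > 0])`. This is the classical bijection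
between Dyck paths of semilength `n` and bicolored Motzkin paths of length `n - 1`, the horizontal
steps of one color being the indices with `rᵢ, sᵢ > 0`. A path with exactly one such step, at
height `t`, is cut by it into two Motzkin paths between the heights `0` and `t`. In these, `r` and
`s` become the distance between two consecutive down steps, the `t`-th and the `(t + 1)`-st (the
left path being read backwards). The Motzkin paths from height `t` to `0` with that distance equal
to `s` have the generating function `x ^ (s - 1) (1 + x m) ^ (s - 1) (x m) ^ t`. What remains is the
geometric series of `(x m) ^ 2`, and `m = 1 + x m + x² m²` gives
`1 / (1 - (x m) ^ 2) = 1 + x² (x m)′`.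
-/

/-- For each letter `x` of `w` that has a successor, in order of occurrence, whether the successor
is the other letter. A word is determined by its first letter and its two sequences of turns. -/
def turns (x : Bool) : List Bool → List Bool
  | [] => []
  | [_] => []
  | a :: b :: w => if a = x then (b != x) :: turns x (b :: w) else turns x (b :: w)

@[simp] theorem turns_singleton (x a : Bool) : turns x [a] = [] := rfl

theorem turns_cons_cons (x a b : Bool) (w : List Bool) :
    turns x (a :: b :: w) = if a = x then (b != x) :: turns x (b :: w) else turns x (b :: w) :=
  rfl

theorem turns_append_cons (x y : Bool) (p q : List Bool) :
    turns x (p ++ y :: q) = turns x (p ++ [y]) ++ turns x (y :: q) := by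
  induction p with
  | nil => simp
  | cons a p ih =>
    cases p with
    | nil => by_cases h : a = x <;> simp [turns_cons_cons, h]
    | cons b p =>
      simp only [List.cons_append, turns_cons_cons] at ih ⊢
      split_ifs <;> simp [ih]

theorem length_turns_append_singleton (x y : Bool) (p : List Bool) :
    (turns x (p ++ [y])).length = p.count x := by
  induction p with
  | nil => simp
  | cons a p ih =>
    cases p with
    | nil => by_cases h : a = x <;> simp [turns_cons_cons, h]
    | cons b p =>
      simp only [List.cons_append, turns_cons_cons, List.count_cons] at ih ⊢
      split_ifs <;> simp_all

theorem take_turns_append_cons (x y : Bool) (p q : List Bool) :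
    (turns x (p ++ y :: q)).take (p.count x) = turns x (p ++ [y]) := by
  rw [turns_append_cons, ← length_turns_append_singleton x y p, List.take_left' rfl]

/-- Turns at the two letters alternate, so their numbers differ by what the first and the last
letter say. -/
theorem count_turns_true_add_toNat {a y : Bool} {p : List Bool}
    (h : (p ++ [y]).head? = some a) :
    (turns true (p ++ [y])).count true + y.toNat =
      (turns false (p ++ [y])).count true + a.toNat := by
  induction p generalizing a with
  | nil => simp_all
  | cons b p ih =>
    obtain rfl : b = a := by simpa using h
    obtain ⟨c, q, hcq⟩ := List.exists_cons_of_ne_nil (List.concat_ne_nil y p)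
    have := @ih c (by simp_all)
    cases b <;> cases c <;> simp_all [turns_cons_cons, add_right_comm]

theorem exists_turns_eq_append_true {x y : Bool} {p : List Bool} (hx : x ∈ p) (hy : y ≠ x) :
    ∃ l, turns x (p ++ [y]) = l ++ [true] := by
  induction p using List.reverseRecOn generalizing y with
  | nil => simp at hx
  | append_singleton p c ih =>
    rw [List.append_assoc, List.singleton_append, turns_append_cons]
    obtain rfl | hc := eq_or_ne c x
    · exact ⟨turns c (p ++ [c]), by simp [turns_cons_cons, hy]⟩
    · simpa [turns_cons_cons, hc] using ih (by simpa [hc.symm] using hx) hc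

theorem eq_of_turns_eq {x : Bool} {v w : List Bool}
    (h : ∀ y, turns y (x :: v) = turns y (x :: w)) : v = w := by
  induction v generalizing x w with
  | nil =>
    cases w with
    | nil => rfl
    | cons b w => simpa [turns_cons_cons] using h x
  | cons a v ih =>
    cases w with
    | nil => simpa [turns_cons_cons] using h x
    | cons b w =>
      have hx := h x
      simp only [turns_cons_cons, if_true, List.cons.injEq] at hx
      obtain rfl : a = b := by simpa using hx.1
      rw [ih (x := a) fun y => ?_]
      obtain rfl | hy := eq_or_ne x y
      · exact hx.2
      · simpa [turns_cons_cons, hy] using h y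

theorem exists_turns_eq : ∀ (x : Bool) (a b : List Bool), a.getLast? ≠ some false →
    a.count true = b.count true + x.toNat →
      ∃ v, turns true (x :: v) = a ∧ turns false (x :: v) = b
  | true, [], b, _, hcount => by simp at hcount
  | true, c :: a, b, hlast, hcount => by
    obtain ⟨v, ha, hb⟩ := exists_turns_eq (!c) a b (by cases a <;> simp_all)
      (by cases c <;> simpa using hcount)
    exact ⟨(!c) :: v, by simp [turns_cons_cons, ha], by simp [turns_cons_cons, hb]⟩
  | false, a, [], hlast, hcount => by
    obtain rfl : a = [] := by
      rcases List.eq_nil_or_concat a with rfl | ⟨a, (_ | _), rfl⟩ <;> simp_all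
    exact ⟨[], rfl, rfl⟩
  | false, a, c :: b, hlast, hcount => by
    obtain ⟨v, ha, hb⟩ := exists_turns_eq c a b hlast
      (by cases c <;> simpa using hcount)
    exact ⟨c :: v, by simp [turns_cons_cons, ha], by simp [turns_cons_cons, hb]⟩
termination_by _ a b => a.length + b.length

theorem count_take_mono {α : Type*} [BEq α] (x : α) (l : List α) {i j : ℕ} (h : i ≤ j) :
    (l.take i).count x ≤ (l.take j).count x :=
  (List.take_sublist_take_left h).count_le x

theorem exists_eq_append_cons_of_lt_count {α : Type*} [DecidableEq α] {x : α} {w : List α}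
    {i : ℕ} (h : i < w.count x) : ∃ p q, w = p ++ x :: q ∧ p.count x = i := by
  induction w generalizing i with
  | nil => simp at h
  | cons a w ih =>
    by_cases ha : a = x
    · subst ha
      cases i with
      | zero => exact ⟨[], w, rfl, rfl⟩
      | succ i =>
        obtain ⟨p, q, rfl, hp⟩ := ih (i := i) (by simpa using h)
        exact ⟨a :: p, q, rfl, by simp [hp]⟩
    · obtain ⟨p, q, rfl, hp⟩ := ih (i := i) (by simpa [ha] using h)
      exact ⟨a :: p, q, rfl, by simp [ha, hp]⟩

theorem forall_prefix_count_le_iff {w : List Bool} :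
    (∀ p, p <+: w → p.count false ≤ p.count true) ↔
      ∀ p q, w = p ++ false :: q → p.count false < p.count true := by
  constructor
  · rintro h p q rfl
    simpa using h (p ++ [false]) ⟨q, by simp⟩
  · intro h p hp
    induction p using List.reverseRecOn with
    | nil => simp
    | append_singleton p y ih =>
      obtain ⟨q, rfl⟩ := hp
      cases y
      · simpa using h p q (by simp)
      · simpa using (ih ⟨true :: q, by simp⟩).trans (Nat.le_succ _)

/-- The sequence of turns at the up steps of `p` ends with a turn, and it has one turn more than
that at the down steps of `p`. So an initial part of it has no more turns than the latter if and
only if it stops before the last up step of `p`. -/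
theorem count_take_turns_le_iff {v p q : List Bool} (hw : true :: v = p ++ false :: q) :
    ((turns true (true :: v)).take (p.count false)).count true ≤
        ((turns false (true :: v)).take (p.count false)).count true ↔
      p.count false < p.count true := by
  obtain ⟨p', rfl⟩ : ∃ p', p = true :: p' := by
    cases p <;> simp_all
  obtain ⟨l, hl⟩ := exists_turns_eq_append_true (x := true) (y := false) (p := true :: p')
    (by simp) (by simp)
  have hlen := length_turns_append_singleton true false (true :: p')
  have hcount := count_turns_true_add_toNat (a := true) (y := false) (p := true :: p') rfl
  have htrue := take_turns_append_cons true false (true :: p') q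
  rw [hw, take_turns_append_cons false false (true :: p') q]
  rw [hl] at hlen hcount htrue
  generalize turns true (true :: p' ++ false :: q) = A at *
  generalize true :: p' = p at *
  have hcount : l.count true = (turns false (p ++ [false])).count true := by simpa using hcount
  rw [← hcount, ← hlen, List.length_append, List.length_singleton, Nat.lt_succ_iff]
  rw [← hlen, List.length_append, List.length_singleton] at htrue
  constructor
  · contrapose!
    intro h
    simpa [htrue] using count_take_mono true A (Nat.succ_le_of_lt h)
  · intro h
    have hl : A.take l.length = l := by
      rw [← Nat.min_eq_left l.length.le_succ, ← List.take_take, htrue, List.take_left' rfl]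
    simpa [hl] using count_take_mono true A h

theorem isDyckWord_true_cons_iff {n : ℕ} {v : List Bool} :
    IsDyckWord n (true :: v) ↔ (true :: v).count true = n ∧ (true :: v).count false = n ∧
      ∀ i < n, ((turns true (true :: v)).take i).count true ≤
        ((turns false (true :: v)).take i).count true := by
  rw [IsDyckWord, forall_prefix_count_le_iff, ← List.count_true_add_count_false]
  constructor
  · rintro ⟨-, ht, hf, h⟩
    refine ⟨ht, hf, fun i hi => ?_⟩
    obtain ⟨p, q, hw, rfl⟩ := exists_eq_append_cons_of_lt_count (hi.trans_eq hf.symm)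
    exact (count_take_turns_le_iff hw).2 (h p q hw)
  · rintro ⟨ht, hf, h⟩
    refine ⟨by rw [ht, hf, two_mul], ht, hf, fun p q hw => (count_take_turns_le_iff hw).1 (h _ ?_)⟩
    rw [← hf, hw]
    simp

/-- Bicolored Motzkin paths from height `t` to height `0`. A step is a pair `(a, b)` of bits: `b`
raises the path by one and `a` lowers it by one, so that `(false, false)` and `(true, true)` are
the two kinds of horizontal steps. -/
def IsBicoloredMotzkin : ℕ → List (Bool × Bool) → Prop
  | t, [] => t = 0
  | t, (false, false) :: l => IsBicoloredMotzkin t l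
  | t, (true, true) :: l => IsBicoloredMotzkin t l
  | t, (false, true) :: l => IsBicoloredMotzkin (t + 1) l
  | 0, (true, false) :: _ => False
  | t + 1, (true, false) :: l => IsBicoloredMotzkin t l

theorem isBicoloredMotzkin_iff {t : ℕ} {l : List (Bool × Bool)} :
    IsBicoloredMotzkin t l ↔ l.countP Prod.fst = l.countP Prod.snd + t ∧
      ∀ i, (l.take i).countP Prod.fst ≤ (l.take i).countP Prod.snd + t := by
  induction l generalizing t with
  | nil => simp [IsBicoloredMotzkin, eq_comm]
  | cons c l ih =>
    rw [← Nat.and_forall_add_one]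
    obtain ⟨_ | _, _ | _⟩ := c
    · simp [IsBicoloredMotzkin, ih]
    · simp [IsBicoloredMotzkin, ih, add_assoc, add_comm 1]
    · cases t
      · simpa [IsBicoloredMotzkin] using fun _ => ⟨0, by simp⟩
      · simp [IsBicoloredMotzkin, ih, ← add_assoc]
    · simp [IsBicoloredMotzkin, ih, add_right_comm]

/-- The sequence of pairs `([rᵢ > 0], [sᵢ > 0])`, `1 ≤ i ≤ n - 1`, of a Dyck word `w` of
semilength `n`. Zipping drops the last up step, which has no `rᵢ`. -/
def turnSteps (w : List Bool) : List (Bool × Bool) :=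
  (turns true w).zip (turns false w)

theorem IsDyckWord.exists_eq_up_append_down {N : ℕ} {w : List Bool} (h : IsDyckWord (N + 1) w) :
    ∃ v, w = true :: (v ++ [false]) := by
  obtain ⟨-, ht, hf, hpre⟩ := h
  obtain ⟨w, rfl⟩ : ∃ w', w = true :: w' := by
    rcases w with _ | ⟨_ | _, w⟩
    · simp at ht
    · simpa using hpre [false] ⟨w, rfl⟩
    · exact ⟨w, rfl⟩
  rcases List.eq_nil_or_concat w with rfl | ⟨v, _ | _, rfl⟩
  · simp at hf
  · exact ⟨v, by simp⟩
  · have := hpre (true :: v) ⟨[true], by simp⟩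
    simp at ht hf this
    omega

theorem count_map_fst {l : List (Bool × Bool)} :
    (l.map Prod.fst).count true = l.countP Prod.fst := by
  simp [List.count, List.countP_map, Function.comp_def]

theorem count_map_snd {l : List (Bool × Bool)} :
    (l.map Prod.snd).count true = l.countP Prod.snd := by
  simp [List.count, List.countP_map, Function.comp_def]

theorem turnSteps_eq_of_turns_eq {w : List Bool} {l : List (Bool × Bool)}
    (ht : turns true w = l.map Prod.fst ++ [true]) (hf : turns false w = l.map Prod.snd) :
    turnSteps w = l := by
  rw [turnSteps, ht, hf, ← List.append_nil (l.map Prod.snd), List.zip_append (by simp),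
    List.zip_map', List.zip_nil_right, List.append_nil]
  exact List.map_id l

theorem IsDyckWord.turns_eq {N : ℕ} {w : List Bool} (h : IsDyckWord (N + 1) w) :
    turns true w = (turnSteps w).map Prod.fst ++ [true] ∧
      turns false w = (turnSteps w).map Prod.snd ∧ (turnSteps w).length = N := by
  obtain ⟨v, rfl⟩ := h.exists_eq_up_append_down
  obtain ⟨-, ht, hf, -⟩ := h
  rw [← List.cons_append] at ht hf ⊢
  obtain ⟨l, hl⟩ := exists_turns_eq_append_true (x := true) (y := false) (p := true :: v)
    (by simp) (by simp)
  have hlenl : l.length = N := by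
    have := length_turns_append_singleton true false (true :: v)
    rw [hl] at this
    simp at this ht
    omega
  have hlen : (turns false (true :: v ++ [false])).length = N := by
    rw [length_turns_append_singleton]
    simpa using hf
  have heq : turnSteps (true :: v ++ [false]) = l.zip (turns false (true :: v ++ [false])) := by
    rw [turnSteps, hl, ← List.append_nil (turns false _), List.zip_append (hlenl.trans hlen.symm),
      List.zip_nil_right, List.append_nil, List.append_nil]
  rw [heq, List.map_fst_zip (hlenl.trans hlen.symm).le, List.map_snd_zip (hlen.trans hlenl.symm).le]
  exact ⟨hl, rfl, by rw [List.length_zip, hlenl, hlen, min_self]⟩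

theorem count_eq_and_iff_of_turns_eq {v : List Bool} {l : List (Bool × Bool)}
    (ht : turns true (true :: v) = l.map Prod.fst ++ [true])
    (hf : turns false (true :: v) = l.map Prod.snd) :
    ((true :: v).count true = l.length + 1 ∧ (true :: v).count false = l.length + 1) ↔
      l.countP Prod.fst = l.countP Prod.snd := by
  obtain ⟨p, y, hp⟩ : ∃ p y, true :: v = p ++ [y] :=
    ⟨_, _, (List.dropLast_append_getLast (List.cons_ne_nil true v)).symm⟩
  have hcount := count_turns_true_add_toNat (a := true) (y := y) (p := p) (by simp [← hp])
  have hpt := length_turns_append_singleton true y p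
  have hpf := length_turns_append_singleton false y p
  rw [hp] at ht hf ⊢
  rw [ht, hf, List.count_append, count_map_fst, count_map_snd] at hcount
  rw [ht] at hpt
  rw [hf] at hpf
  simp only [List.length_append, List.length_map, List.length_singleton] at hpt hpf
  cases y <;> simp [← hpt, ← hpf] at hcount ⊢ <;> omega

theorem isDyckWord_iff_isBicoloredMotzkin {v : List Bool} {l : List (Bool × Bool)}
    (ht : turns true (true :: v) = l.map Prod.fst ++ [true])
    (hf : turns false (true :: v) = l.map Prod.snd) :
    IsDyckWord (l.length + 1) (true :: v) ↔ IsBicoloredMotzkin 0 l := by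
  rw [isDyckWord_true_cons_iff, ← and_assoc, count_eq_and_iff_of_turns_eq ht hf,
    isBicoloredMotzkin_iff, ht, hf]
  have htake : ∀ i ≤ l.length, ((l.map Prod.fst ++ [true]).take i).count true =
      (l.take i).countP Prod.fst := fun i hi => by
    rw [List.take_append_of_le_length (by simpa using hi), ← List.map_take, count_map_fst]
  refine and_congr_right fun hl => ⟨fun h i => ?_, fun h i hi => ?_⟩
  · rcases le_total i l.length with hi | hi
    · simpa [htake i hi, ← List.map_take, count_map_snd] using h i (Nat.lt_succ_of_le hi)
    · rw [List.take_of_length_le hi]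
      exact hl.le
  · rw [htake i (Nat.le_of_lt_succ hi), ← List.map_take, count_map_snd]
    exact h i

theorem bijOn_turnSteps (N : ℕ) :
    Set.BijOn turnSteps {w | IsDyckWord (N + 1) w} {l | l.length = N ∧ IsBicoloredMotzkin 0 l} := by
  refine ⟨fun w h => ?_, fun w hw w' hw' h => ?_, ?_⟩
  · obtain ⟨v, rfl⟩ := h.exists_eq_up_append_down
    obtain ⟨ht, hf, hN⟩ := h.turns_eq
    exact ⟨hN, (isDyckWord_iff_isBicoloredMotzkin ht hf).1 (hN.symm ▸ h)⟩
  · obtain ⟨v, rfl⟩ := hw.exists_eq_up_append_down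
    obtain ⟨v', rfl⟩ := hw'.exists_eq_up_append_down
    obtain ⟨ht, hf, -⟩ := hw.turns_eq
    obtain ⟨ht', hf', -⟩ := hw'.turns_eq
    refine congrArg _ (eq_of_turns_eq (x := true) ?_)
    rintro (_ | _)
    · rw [hf, hf', h]
    · rw [ht, ht', h]
  · rintro l ⟨rfl, hl⟩
    have hcount := (isBicoloredMotzkin_iff.1 hl).1
    obtain ⟨v, ht, hf⟩ := exists_turns_eq true (l.map Prod.fst ++ [true]) (l.map Prod.snd)
      (by simp) (by simpa [count_map_fst, count_map_snd] using hcount)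
    exact ⟨true :: v, (isDyckWord_iff_isBicoloredMotzkin ht hf).2 hl,
      turnSteps_eq_of_turns_eq ht hf⟩

/-- The number of letters other than `x` strictly between the occurrences number `i` and `i + 1`
(counted from `0`) of `x` in `w`: the common form of `rStat` and `sStat`. -/
def between (x : Bool) (w : List Bool) (i : ℕ) : ℕ :=
  ((w.take ((w.findIdxs (· == x)).getD (i + 1) 0)).drop
    ((w.findIdxs (· == x)).getD i 0 + 1)).count (!x)

theorem rStat_succ (w : List Bool) (i : ℕ) : rStat w (i + 1) = between true w i := rfl

theorem sStat_succ (w : List Bool) (i : ℕ) : sStat w (i + 1) = between false w i := rfl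

theorem exists_eq_append_replicate {x : Bool} {w : List Bool} {i : ℕ} (h : i + 1 < w.count x) :
    ∃ p r q, w = p ++ x :: (List.replicate r (!x) ++ x :: q) ∧ p.count x = i := by
  obtain ⟨p, q, rfl, hp⟩ := exists_eq_append_cons_of_lt_count (Nat.lt_of_succ_lt h)
  obtain ⟨p', q, rfl, hp'⟩ := exists_eq_append_cons_of_lt_count (x := x) (w := q) (i := 0) <| by
    simp only [List.count_append, List.count_cons_self] at h
    omega
  refine ⟨p, p'.length, q, ?_, hp⟩
  rw [← List.eq_replicate_of_mem fun b hb => ?_]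
  have : b ≠ x := fun hbx => List.count_eq_zero.1 hp' (hbx ▸ hb)
  simpa using Bool.eq_not_of_ne this

theorem between_append_replicate (x : Bool) (p : List Bool) (r : ℕ) (q : List Bool) :
    between x (p ++ x :: (List.replicate r (!x) ++ x :: q)) (p.count x) = r := by
  have hrep : ∀ s, (List.replicate r (!x)).findIdxs (· == x) s = [] := fun s => by
    simp [List.findIdxs_eq_nil_iff]
  have hlen : (p.findIdxs (· == x)).length = p.count x := by
    rw [List.length_findIdxs, List.count]
  have hidx : (p ++ x :: (List.replicate r (!x) ++ x :: q)).findIdxs (· == x) =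
      p.findIdxs (· == x) ++ p.length :: (p.length + 1 + r) ::
        q.findIdxs (· == x) (p.length + 1 + r + 1) := by
    simp [List.findIdxs_append, List.findIdxs_cons, hrep]
  have hw : p ++ x :: (List.replicate r (!x) ++ x :: q) =
      (p ++ [x] ++ List.replicate r (!x)) ++ x :: q := by simp
  rw [between, hidx, ← hlen, List.getD_append_right _ _ _ _ le_rfl,
    List.getD_append_right _ _ _ _ (Nat.le_add_right _ 1), Nat.sub_self, Nat.add_sub_cancel_left,
    hw, List.getD_cons_zero, List.getD_cons_succ, List.getD_cons_zero,
    List.take_left' (by simp; omega), List.drop_left' (by simp), List.count_replicate_self]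

theorem between_pos_iff {x : Bool} {w : List Bool} {i : ℕ} (h : i + 1 < w.count x) :
    0 < between x w i ↔ (turns x w)[i]? = some true := by
  obtain ⟨p, r, q, rfl, rfl⟩ := exists_eq_append_replicate h
  rw [between_append_replicate, turns_append_cons, ← length_turns_append_singleton x x p,
    List.getElem?_append_right le_rfl]
  cases r <;> simp [List.replicate_succ, turns_cons_cons]

/-- The distance from the `k`-th to the `(k + 1)`-st `true` of a list, where a further `true`
just before the list is the `0`-th one, and one more `true` is added just after the list. -/
def gap : ℕ → List Bool → ℕ
  | 0, [] => 1
  | _ + 1, [] => 0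
  | 0, true :: _ => 1
  | 0, false :: l => gap 0 l + 1
  | k + 1, true :: l => gap k l
  | k + 1, false :: l => gap (k + 1) l

theorem gap_replicate_append (g : ℕ) (l : List Bool) :
    gap 0 (List.replicate g false ++ true :: l) = g + 1 := by
  induction g with
  | zero => rfl
  | succ g ih => simp [List.replicate_succ, gap, ih]

theorem gap_add_count_succ_append (d : ℕ) (l l' : List Bool) :
    gap (d + l.count true + 1) (l ++ true :: l') = gap d l' := by
  induction l with
  | nil => simp [gap]
  | cons a l ih =>
    cases a
    · simpa [gap] using ih
    · simpa [gap, ← add_assoc] using ih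

theorem gap_append_true_cons_of_le {k : ℕ} {l : List Bool} (h : k ≤ l.count true) (l' : List Bool) :
    gap k (l ++ true :: l') = gap k l := by
  induction l generalizing k with
  | nil =>
    obtain rfl : k = 0 := by simpa using h
    rfl
  | cons a l ih =>
    cases a <;> cases k
    · simpa [gap] using ih (k := 0) (by simp)
    · simpa [gap] using ih (by simpa using h)
    · simp [gap]
    · simpa [gap] using ih (by simpa using h)

theorem gap_append_false (k : ℕ) (l : List Bool) :
    gap k (l ++ [false]) = gap k l + if k = l.count true then 1 else 0 := by
  induction l generalizing k with
  | nil => cases k <;> simp [gap]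
  | cons a l ih => cases a <;> cases k <;> simp [gap, ih, add_right_comm]

theorem gap_reverse {k h : ℕ} {l : List Bool} (hl : l.count true = k + h) :
    gap k l.reverse = gap h l := by
  induction l generalizing h k with
  | nil =>
    obtain ⟨rfl, rfl⟩ : k = 0 ∧ h = 0 := by simpa [eq_comm] using hl
    rfl
  | cons a l ih =>
    rw [List.reverse_cons]
    cases a with
    | false =>
      rw [List.count_cons_of_ne (by simp)] at hl
      rw [gap_append_false, ih hl, List.count_reverse, hl]
      cases h <;> simp [gap]
    | true =>
      rw [List.count_cons_self] at hl
      cases h with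
      | zero =>
        have := gap_add_count_succ_append 0 l.reverse []
        rwa [List.count_reverse, zero_add, hl] at this
      | succ h =>
        have hl' : l.count true = k + h := by omega
        rw [gap_append_true_cons_of_le (by rw [List.count_reverse]; omega), ih hl', gap]

theorem turns_cons_replicate_append (y : Bool) (g : ℕ) (q : List Bool) :
    turns y ((!y) :: (List.replicate (g + 1) y ++ (!y) :: q)) =
      List.replicate g false ++ true :: turns y ((!y) :: q) := by
  induction g with
  | zero => simp [turns_cons_cons]
  | succ g ih => simpa [List.replicate_succ, turns_cons_cons] using ih

theorem gap_count_append {m : List Bool} (hm : m.getLast? ≠ some false) (l : List Bool) :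
    gap (m.count true) (m ++ l) = gap 0 l := by
  rcases List.eq_nil_or_concat m with rfl | ⟨m, _ | _, rfl⟩
  · rfl
  · simp at hm
  · simpa using gap_add_count_succ_append 0 m l

theorem getLast?_turns_append_singleton_ne {x : Bool} {p : List Bool} :
    (turns (!x) (p ++ [x])).getLast? ≠ some false := by
  by_cases h : (!x) ∈ p
  · obtain ⟨l, hl⟩ := exists_turns_eq_append_true h (Bool.not_ne_self x).symm
    simp [hl]
  · rw [List.eq_nil_of_length_eq_zero ((length_turns_append_singleton _ _ _).trans
      (List.count_eq_zero.2 h))]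
    simp

/-- At a letter `!x` whose successor is again `!x` there is no turn, so a run of `!x` between two
occurrences of `x` shows in the turns at `!x` as a block `false ⋯ false true` of the same length. -/
theorem between_eq_gap {x : Bool} {v : List Bool} {i : ℕ} (h : i + 1 < (true :: v).count x)
    (hi : (turns x (true :: v))[i]? = some true) :
    between x (true :: v) i =
      gap (((turns x (true :: v)).take i).count true + (!x).toNat) (turns (!x) (true :: v)) := by
  have hr := (between_pos_iff h).2 hi
  obtain ⟨p, r, q, hw, rfl⟩ := exists_eq_append_replicate h
  have hcount : (turns x (p ++ [x])).count true + (!x).toNat =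
      (turns (!x) (p ++ [x])).count true := by
    have := count_turns_true_add_toNat (a := true) (y := x) (p := p) (by cases p <;> simp_all)
    cases x <;> simpa [eq_comm] using this
  rw [hw] at hr ⊢
  rw [between_append_replicate] at hr ⊢
  obtain ⟨g, rfl⟩ := Nat.exists_eq_succ_of_ne_zero hr.ne'
  have hturns := turns_cons_replicate_append (!x) g q
  rw [Bool.not_not] at hturns
  rw [take_turns_append_cons, hcount, turns_append_cons (!x) x p (_ ++ _), hturns,
    gap_count_append getLast?_turns_append_singleton_ne, gap_replicate_append]

theorem IsDyckWord.getElem?_turnSteps_eq_iff {N i : ℕ} {w : List Bool} (h : IsDyckWord (N + 1) w)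
    (hi : i < N) : (turnSteps w)[i]? = some (true, true) ↔
      0 < rStat w (i + 1) ∧ 0 < sStat w (i + 1) := by
  obtain ⟨-, ht, hf, -⟩ := h
  rw [turnSteps, List.getElem?_zip_eq_some, rStat_succ, sStat_succ, between_pos_iff (by omega),
    between_pos_iff (by omega)]

theorem mem_dyckRS_succ_iff {N r s : ℕ} {w : List Bool} :
    w ∈ dyckRS (N + 1) r s ↔ IsDyckWord (N + 1) w ∧
      ∃ i, (∀ j, (turnSteps w)[j]? = some (true, true) ↔ j = i) ∧
        rStat w (i + 1) = r ∧ sStat w (i + 1) = s := by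
  refine and_congr_right fun hw => ?_
  have hlt : ∀ {j}, (turnSteps w)[j]? = some (true, true) → j < N := fun hj =>
    (List.getElem?_eq_some_iff.1 hj).1.trans_eq hw.turns_eq.2.2
  simp only [Finset.mem_Icc, Nat.add_sub_cancel]
  constructor
  · rintro ⟨i, ⟨hi, hiN⟩, hpos, hr, hs, huniq⟩
    obtain ⟨i, rfl⟩ := Nat.exists_eq_add_of_le' hi
    refine ⟨i, fun j => ⟨fun hj => ?_, ?_⟩, hr, hs⟩
    · exact Nat.succ_injective (huniq (j + 1) ⟨Nat.le_add_left 1 j, hlt hj⟩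
        ((hw.getElem?_turnSteps_eq_iff (hlt hj)).1 hj))
    · rintro rfl
      exact (hw.getElem?_turnSteps_eq_iff hiN).2 hpos
  · rintro ⟨i, huniq, hr, hs⟩
    have hiN := hlt ((huniq i).2 rfl)
    refine ⟨i + 1, ⟨Nat.le_add_left 1 i, hiN⟩,
      (hw.getElem?_turnSteps_eq_iff hiN).1 ((huniq i).2 rfl), hr, hs, ?_⟩
    rintro j ⟨hj, hjN⟩ hpos
    obtain ⟨j, rfl⟩ := Nat.exists_eq_add_of_le' hj
    exact congrArg (· + 1) ((huniq j).1 ((hw.getElem?_turnSteps_eq_iff hjN).2 hpos))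

theorem getElem?_append_cons_eq_some_iff {α : Type*} {x : α} {a b : List α} (ha : x ∉ a)
    (hb : x ∉ b) (j : ℕ) : (a ++ x :: b)[j]? = some x ↔ j = a.length := by
  constructor
  · intro h
    rcases lt_trichotomy j a.length with hj | hj | hj
    · rw [List.getElem?_append_left hj] at h
      exact absurd (List.mem_of_getElem? h) ha
    · exact hj
    · obtain ⟨k, rfl⟩ := Nat.exists_eq_add_of_lt hj
      rw [List.getElem?_append_right (by omega), show a.length + k + 1 - a.length = k + 1 by omega,
        List.getElem?_cons_succ] at h
      exact absurd (List.mem_of_getElem? h) hb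
  · rintro rfl
    simp

theorem exists_eq_append_cons_of_getElem?_iff {α : Type*} {x : α} {l : List α} {i : ℕ}
    (h : ∀ j : ℕ, l[j]? = some x ↔ j = i) :
    ∃ a b, l = a ++ x :: b ∧ x ∉ a ∧ x ∉ b := by
  obtain ⟨hi, hx⟩ := List.getElem?_eq_some_iff.1 ((h i).2 rfl)
  refine ⟨l.take i, l.drop (i + 1), ?_, fun hmem => ?_, fun hmem => ?_⟩
  · rw [← hx, List.getElem_cons_drop, List.take_append_drop]
  · obtain ⟨j, hj⟩ := List.mem_iff_getElem?.1 hmem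
    rw [List.getElem?_take] at hj
    split_ifs at hj with hji
    exact hji.ne ((h j).1 hj)
  · obtain ⟨j, hj⟩ := List.mem_iff_getElem?.1 hmem
    rw [List.getElem?_drop] at hj
    have := (h _).1 hj
    omega

/-- The steps of a Motzkin path, seen as steps of a bicolored Motzkin path that has no horizontal
step `(true, true)`. -/
def motzkinStep (o : Option Bool) : Bool × Bool := (o == some false, o == some true)

theorem motzkinStep_injective : Function.Injective motzkinStep := by decide

theorem mem_range_map_motzkinStep {l : List (Bool × Bool)} :
    l ∈ Set.range (List.map motzkinStep) ↔ (true, true) ∉ l := by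
  have hrange : ∀ c, c ∈ Set.range motzkinStep ↔ c ≠ (true, true) := by decide
  simp only [Set.range_list_map, Set.mem_ofPred_eq, hrange]
  exact ⟨fun h hl => h _ hl rfl, fun h c hc hcl => h (hcl ▸ hc)⟩

/-- Motzkin paths from height `t` to height `0`. -/
def IsMotzkinFrom (t : ℕ) (w : List (Option Bool)) : Prop :=
  IsBicoloredMotzkin t (w.map motzkinStep)

section IsMotzkinFrom

variable (t : ℕ) (w : List (Option Bool))

@[simp] theorem isMotzkinFrom_nil : IsMotzkinFrom t [] ↔ t = 0 := Iff.rfl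

@[simp] theorem isMotzkinFrom_none_cons : IsMotzkinFrom t (none :: w) ↔ IsMotzkinFrom t w := Iff.rfl

@[simp] theorem isMotzkinFrom_up_cons :
    IsMotzkinFrom t (some true :: w) ↔ IsMotzkinFrom (t + 1) w := Iff.rfl

@[simp] theorem isMotzkinFrom_zero_down_cons : IsMotzkinFrom 0 (some false :: w) ↔ False := Iff.rfl

end IsMotzkinFrom

theorem isMotzkinFrom_iff {t : ℕ} {w : List (Option Bool)} :
    IsMotzkinFrom t w ↔ w.count (some false) = w.count (some true) + t ∧
      ∀ p, p <+: w → p.count (some false) ≤ p.count (some true) + t := by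
  have hcount : ∀ p : List (Option Bool),
      (p.map motzkinStep).countP Prod.fst = p.count (some false) ∧
        (p.map motzkinStep).countP Prod.snd = p.count (some true) := fun p => by
    simp only [List.countP_map]
    exact ⟨rfl, rfl⟩
  simp only [IsMotzkinFrom, isBicoloredMotzkin_iff, hcount, ← List.map_take]
  refine and_congr_right fun _ => ⟨fun h p hp => ?_, fun h i => h _ (List.take_prefix i w)⟩
  rw [List.prefix_iff_eq_take.1 hp]
  exact h _

theorem IsMotzkinFrom.count_down_eq {t : ℕ} {w : List (Option Bool)} (h : IsMotzkinFrom t w) :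
    w.count (some false) = w.count (some true) + t :=
  (isMotzkinFrom_iff.1 h).1

/-- The bicolored path with a single step `(true, true)` which, seen from that step, is `P` to the
left (where reading backwards exchanges up and down steps) and `Q` to the right. -/
def glue (P Q : List (Option Bool)) : List (Bool × Bool) :=
  ((P.map motzkinStep).map Prod.swap).reverse ++ (true, true) :: Q.map motzkinStep

theorem map_fst_glue (P Q : List (Option Bool)) : (glue P Q).map Prod.fst =
    (P.map (· == some true)).reverse ++ true :: Q.map (· == some false) := by
  simp [glue, motzkinStep, Function.comp_def]

theorem map_snd_glue (P Q : List (Option Bool)) : (glue P Q).map Prod.snd =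
    (P.map (· == some false)).reverse ++ true :: Q.map (· == some true) := by
  simp [glue, motzkinStep, Function.comp_def]

theorem getElem?_glue_eq_some_iff {P Q : List (Option Bool)} (j : ℕ) :
    (glue P Q)[j]? = some (true, true) ↔ j = P.length := by
  have h : ∀ R : List (Option Bool), (true, true) ∉ R.map motzkinStep := fun R =>
    mem_range_map_motzkinStep.1 ⟨R, rfl⟩
  rw [glue, getElem?_append_cons_eq_some_iff _ (h Q)]
  · simp
  · rw [List.mem_reverse, ← Prod.swap_prod_mk, List.mem_map_of_injective Prod.swap_injective]
    exact h P

theorem exists_eq_glue {l : List (Bool × Bool)} {i : ℕ}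
    (h : ∀ j : ℕ, l[j]? = some (true, true) ↔ j = i) : ∃ P Q, l = glue P Q := by
  obtain ⟨a, b, rfl, ha, hb⟩ := exists_eq_append_cons_of_getElem?_iff h
  obtain ⟨Q, rfl⟩ := mem_range_map_motzkinStep.2 hb
  have ha' : (true, true) ∉ a.reverse.map Prod.swap := by
    rwa [← Prod.swap_prod_mk, List.mem_map_of_injective Prod.swap_injective, List.mem_reverse]
  obtain ⟨P, hP⟩ := mem_range_map_motzkinStep.2 ha'
  exact ⟨P, Q, by simp [glue, hP, Function.comp_def]⟩

theorem glue_injective : Function.Injective2 glue := by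
  intro P P' Q Q' h
  have hlen : P.length = P'.length := by
    rw [← getElem?_glue_eq_some_iff (Q := Q'), ← h, getElem?_glue_eq_some_iff]
  obtain ⟨hP, hQ⟩ := List.append_inj h (by simpa using hlen)
  have hmap := List.map_injective_iff.2 motzkinStep_injective
  exact ⟨hmap (List.map_injective_iff.2 Prod.swap_injective (List.reverse_injective hP)),
    hmap (List.cons.inj hQ).2⟩

theorem isBicoloredMotzkin_reverse_append_iff {P Q : List (Bool × Bool)} :
    IsBicoloredMotzkin 0 ((P.map Prod.swap).reverse ++ Q) ↔
      ∃ t, IsBicoloredMotzkin t P ∧ IsBicoloredMotzkin t Q := by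
  induction P generalizing Q with
  | nil => simp [IsBicoloredMotzkin]
  | cons c P ih =>
    rw [List.map_cons, List.reverse_cons, List.append_assoc, List.singleton_append, ih]
    obtain ⟨_ | _, _ | _⟩ := c
    · simp [IsBicoloredMotzkin]
    · rw [← Nat.or_exists_add_one]
      simp [IsBicoloredMotzkin]
    · conv_rhs => rw [← Nat.or_exists_add_one]
      simp [IsBicoloredMotzkin]
    · simp [IsBicoloredMotzkin]

theorem isBicoloredMotzkin_glue_iff {P Q : List (Option Bool)} :
    IsBicoloredMotzkin 0 (glue P Q) ↔ ∃ t, IsMotzkinFrom t P ∧ IsMotzkinFrom t Q := by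
  rw [glue, isBicoloredMotzkin_reverse_append_iff]
  rfl

/-- Motzkin paths `w` from height `t` to height `0` for which the `d`-th and the `(d + 1)`-st down
steps are `s` steps apart, with the conventions of `gap`. -/
def IsGapPath (s d t : ℕ) (w : List (Option Bool)) : Prop :=
  IsMotzkinFrom t w ∧ gap d (w.map (· == some false)) = s

theorem gap_zero_ne_zero (l : List Bool) : gap 0 l ≠ 0 := by
  rcases l with _ | ⟨_ | _, l⟩ <;> simp [gap]

section IsGapPath

variable (s d t : ℕ) (w : List (Option Bool))

theorem isGapPath_nil : IsGapPath s d t [] ↔ t = 0 ∧ gap d [] = s := Iff.rfl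

theorem not_isGapPath_zero_zero : ¬ IsGapPath 0 0 t w :=
  fun h => gap_zero_ne_zero _ h.2

theorem isGapPath_zero_none_cons :
    IsGapPath (s + 1) 0 t (none :: w) ↔ IsGapPath s 0 t w :=
  and_congr_right' Nat.succ_inj

theorem isGapPath_zero_up_cons :
    IsGapPath (s + 1) 0 t (some true :: w) ↔ IsGapPath s 0 (t + 1) w :=
  and_congr_right' Nat.succ_inj

theorem not_isGapPath_down_cons : ¬ IsGapPath s d 0 (some false :: w) :=
  And.left

theorem isGapPath_zero_succ_down_cons :
    IsGapPath s 0 (t + 1) (some false :: w) ↔ IsMotzkinFrom t w ∧ 1 = s :=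
  Iff.rfl

end IsGapPath

/-- The pairs of paths that, glued together, encode the elements of `dyckRS (N + 2) r s`. -/
def gapPairs (N r s : ℕ) : Set (List (Option Bool) × List (Option Bool)) :=
  {x | x.1.length + x.2.length = N ∧ ∃ t, IsGapPath r t t x.1 ∧ IsGapPath s t t x.2}

theorem count_map_beq {α : Type*} [BEq α] (a : α) (l : List α) :
    (l.map (· == a)).count true = l.count a := by
  simp [List.count, List.countP_map, Function.comp_def]

section Glue

variable {N t : ℕ} {w : List Bool} {P Q : List (Option Bool)}

theorem rStat_eq_gap (hw : IsDyckWord (N + 1) w) (h : turnSteps w = glue P Q)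
    (hP : IsMotzkinFrom t P) : rStat w (P.length + 1) = gap t (P.map (· == some false)) := by
  obtain ⟨ht, hf, hN⟩ := hw.turns_eq
  rw [h, map_fst_glue, List.append_assoc] at ht
  rw [h, map_snd_glue] at hf
  have hlt : P.length < N := by rw [← hN, h]; simp [glue]
  have hup : ((turns true w).take P.length).count true = P.count (some true) := by
    rw [ht, List.take_left' (by simp), List.count_reverse, count_map_beq]
  have hdown : (P.map (· == some false)).count true = P.count (some true) + t := by
    rw [count_map_beq, hP.count_down_eq]
  calc rStat w (P.length + 1) = gap (P.count (some true)) (turns false w) := by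
        obtain ⟨v, rfl⟩ := hw.exists_eq_up_append_down
        rw [rStat_succ, between_eq_gap (by have := hw.2.1; omega) (by simp [ht]), hup]
        rfl
    _ = gap (P.count (some true)) (P.map (· == some false)).reverse := by
        rw [hf, gap_append_true_cons_of_le]
        rw [List.count_reverse, hdown]
        exact Nat.le_add_right _ t
    _ = gap t (P.map (· == some false)) := gap_reverse hdown

theorem sStat_eq_gap (hw : IsDyckWord (N + 1) w) (h : turnSteps w = glue P Q)
    (hP : IsMotzkinFrom t P) (hQ : IsMotzkinFrom t Q) :
    sStat w (P.length + 1) = gap t (Q.map (· == some false)) := by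
  obtain ⟨ht, hf, hN⟩ := hw.turns_eq
  rw [h, map_fst_glue, List.append_assoc, List.cons_append] at ht
  rw [h, map_snd_glue] at hf
  have hlt : P.length < N := by rw [← hN, h]; simp [glue]
  have hdown : ((turns false w).take P.length).count true =
      t + (P.map (· == some true)).reverse.count true := by
    rw [hf, List.take_left' (by simp), List.count_reverse, List.count_reverse, count_map_beq,
      count_map_beq, hP.count_down_eq, add_comm]
  calc sStat w (P.length + 1) =
        gap (t + (P.map (· == some true)).reverse.count true + 1) (turns true w) := by
        obtain ⟨v, rfl⟩ := hw.exists_eq_up_append_down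
        rw [sStat_succ, between_eq_gap (by have := hw.2.2.1; omega) (by simp [hf]), hdown]
        rfl
    _ = gap t (Q.map (· == some false) ++ [true]) := by rw [ht, gap_add_count_succ_append]
    _ = gap t (Q.map (· == some false)) := by
        rw [gap_append_true_cons_of_le]
        rw [count_map_beq, hQ.count_down_eq]
        exact Nat.le_add_left t _

end Glue

theorem turnSteps_image_dyckRS (N r s : ℕ) :
    turnSteps '' dyckRS (N + 2) r s = Function.uncurry glue '' gapPairs N r s := by
  ext l
  constructor
  · rintro ⟨w, hmem, rfl⟩
    obtain ⟨hw, i, hi, hr, hs⟩ := mem_dyckRS_succ_iff.1 hmem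
    obtain ⟨P, Q, hl⟩ := exists_eq_glue hi
    obtain rfl : i = P.length := by
      rw [← getElem?_glue_eq_some_iff, ← hl, hi]
    obtain ⟨hlen, hpath⟩ := (bijOn_turnSteps (N + 1)).mapsTo hw
    rw [hl] at hlen hpath
    obtain ⟨t, hP, hQ⟩ := isBicoloredMotzkin_glue_iff.1 hpath
    refine ⟨(P, Q), ⟨by simpa [glue, ← add_assoc] using hlen, t, ⟨hP, ?_⟩, hQ, ?_⟩, hl.symm⟩
    · rw [← hr, rStat_eq_gap hw hl hP]
    · rw [← hs, sStat_eq_gap hw hl hP hQ]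
  · rintro ⟨⟨P, Q⟩, ⟨hlen, t, ⟨hP, hr⟩, hQ, hs⟩, rfl⟩
    obtain ⟨w, hw, hl⟩ := (bijOn_turnSteps (N + 1)).surjOn
      ⟨by simpa [glue, ← add_assoc] using hlen, isBicoloredMotzkin_glue_iff.2 ⟨t, hP, hQ⟩⟩
    refine ⟨w, mem_dyckRS_succ_iff.2 ⟨hw, P.length, fun j => ?_, ?_, ?_⟩, hl⟩
    · rw [hl, getElem?_glue_eq_some_iff]
    · rw [rStat_eq_gap hw hl hP, hr]
    · rw [sStat_eq_gap hw hl hP hQ, hs]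

theorem ncard_dyckRS (N r s : ℕ) : (dyckRS (N + 2) r s).ncard = (gapPairs N r s).ncard := by
  rw [← Set.ncard_image_of_injective _ glue_injective.uncurry, ← turnSteps_image_dyckRS,
    ((bijOn_turnSteps (N + 1)).injOn.mono fun _ hw => hw.1).ncard_image]

section GeneratingFunctions

open PowerSeries

/-- The generating function, by length, of the words over `α` that satisfy `S`. -/
noncomputable def wordGF {α : Type*} (S : List α → Prop) : PowerSeries ℚ :=
  PowerSeries.mk fun n => ({w | w.length = n ∧ S w}.ncard : ℚ)

theorem setOf_wordPairs_eq_biUnion {α β : Type*} (S : List α → Prop) (T : List β → Prop)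
    (N : ℕ) :
    {x : List α × List β | x.1.length + x.2.length = N ∧ S x.1 ∧ T x.2} =
      ⋃ z ∈ (Finset.HasAntidiagonal.antidiagonal N : Set (ℕ × ℕ)),
        {u | u.length = z.1 ∧ S u} ×ˢ {v | v.length = z.2 ∧ T v} := by
  ext ⟨u, v⟩
  simp only [Set.mem_ofPred_eq, Finset.mem_coe, Finset.HasAntidiagonal.mem_antidiagonal,
    Set.mem_iUnion, Set.mem_prod, exists_prop, Prod.exists]
  constructor
  · rintro ⟨hN, hS, hT⟩
    exact ⟨u.length, v.length, hN, ⟨rfl, hS⟩, rfl, hT⟩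
  · rintro ⟨_, _, hN, ⟨rfl, hS⟩, rfl, hT⟩
    exact ⟨hN, hS, hT⟩

section Words

variable {α β : Type*} [Finite α] [Finite β]

theorem finite_words (S : List α → Prop) (n : ℕ) : {w | w.length = n ∧ S w}.Finite :=
  (List.finite_length_eq α n).subset fun _ h => h.1

theorem ncard_words_succ [Fintype α] (S : List α → Prop) (n : ℕ) :
    {w | w.length = n + 1 ∧ S w}.ncard = ∑ a, {w | w.length = n ∧ S (a :: w)}.ncard := by
  have hU : {w | w.length = n + 1 ∧ S w} = ⋃ a, List.cons a '' {w | w.length = n ∧ S (a :: w)} := by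
    ext w
    rcases w with _ | ⟨a, w⟩ <;> simp
  rw [hU, Set.ncard_iUnion_of_finite fun a => (finite_words _ n).image _, finsum_eq_sum_of_fintype]
  · simp only [Set.ncard_image_of_injective _ List.cons_injective]
  · rintro a b hab
    rw [Function.onFun, Set.disjoint_left]
    rintro _ ⟨u, -, rfl⟩ ⟨u', -, h⟩
    exact hab (List.cons.inj h).1.symm

open Classical in
theorem wordGF_eq_ite_add [Fintype α] (S : List α → Prop) :
    wordGF S = (if S [] then 1 else 0) + X * ∑ a, wordGF fun w => S (a :: w) := by
  ext n
  cases n with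
  | zero =>
    have : {w | w.length = 0 ∧ S w} = if S [] then {[]} else ∅ := by
      ext w
      split_ifs with h <;> simp +contextual [List.length_eq_zero_iff, h]
    rw [map_add, coeff_zero_X_mul, wordGF, coeff_mk, this]
    split_ifs <;> simp
  | succ n =>
    have : coeff (n + 1) (if S [] then (1 : PowerSeries ℚ) else 0) = 0 := by
      split_ifs <;> simp [coeff_one]
    rw [map_add, coeff_succ_X_mul, this, zero_add, map_sum]
    simp only [wordGF, coeff_mk, ncard_words_succ S n, Nat.cast_sum]

theorem finite_wordPairs (S : List α → Prop) (T : List β → Prop) (N : ℕ) :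
    {x : List α × List β | x.1.length + x.2.length = N ∧ S x.1 ∧ T x.2}.Finite := by
  rw [setOf_wordPairs_eq_biUnion]
  exact (Finset.finite_toSet _).biUnion fun z _ =>
    (finite_words S z.1).prod (finite_words T z.2)

theorem coeff_wordGF_mul_wordGF (S : List α → Prop) (T : List β → Prop) (N : ℕ) :
    coeff N (wordGF S * wordGF T) =
      {x : List α × List β | x.1.length + x.2.length = N ∧ S x.1 ∧ T x.2}.ncard := by
  rw [setOf_wordPairs_eq_biUnion, (Finset.finite_toSet _).ncard_biUnion, finsum_mem_coe_finset,
    coeff_mul]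
  · simp only [wordGF, coeff_mk, Set.ncard_prod, Nat.cast_sum, Nat.cast_mul]
  · exact fun z _ => (finite_words S z.1).prod (finite_words T z.2)
  · rintro ⟨a, b⟩ - ⟨a', b'⟩ - hne
    rw [Function.onFun, Set.disjoint_left]
    rintro ⟨u, v⟩ ⟨⟨rfl, -⟩, rfl, -⟩ ⟨⟨rfl, -⟩, rfl, -⟩
    exact hne rfl

end Words

theorem wordGF_false {α : Type*} : wordGF (fun _ : List α => False) = 0 := by
  ext n
  simp [wordGF]

/-- A linear system `D t = X * ∑ u, c t u * D u` has only the zero solution. -/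
theorem eq_zero_of_forall_eq_X_mul {R ι : Type*} [CommSemiring R] {D : ι → PowerSeries R}
    (h : ∀ t, ∃ E ∈ Ideal.span (Set.range D), D t = X * E) (t : ι) : D t = 0 := by
  have key : ∀ n t, X ^ n ∣ D t := by
    intro n
    induction n with
    | zero => simp
    | succ n ih =>
      intro t
      obtain ⟨E, hE, ht⟩ := h t
      have hspan : Ideal.span (Set.range D) ≤ Ideal.span {X ^ n} :=
        Ideal.span_le.2 (Set.range_subset_iff.2 fun t => Ideal.mem_span_singleton.2 (ih t))
      rw [ht, pow_succ']
      exact mul_dvd_mul_left X (Ideal.mem_span_singleton.1 (hspan hE))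
  ext n
  exact X_pow_dvd_iff.1 (key (n + 1) t) n n.lt_succ_self

theorem motzkinGF_eq_wordGF : motzkinGF = wordGF (IsMotzkinFrom 0) := by
  have h : ∀ w, IsMotzkinWord w ↔ IsMotzkinFrom 0 w := fun w => by
    rw [isMotzkinFrom_iff]
    rfl
  ext n
  simp only [motzkinGF, wordGF, motzkin, coeff_mk, h]

theorem wordGF_isMotzkinFrom_zero :
    wordGF (IsMotzkinFrom 0) = 1 + X * (wordGF (IsMotzkinFrom 0) + wordGF (IsMotzkinFrom 1)) := by
  conv_lhs => rw [wordGF_eq_ite_add, Fintype.sum_option, Fintype.sum_bool]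
  simp [wordGF_false]

theorem wordGF_isMotzkinFrom_succ (t : ℕ) :
    wordGF (IsMotzkinFrom (t + 1)) = X * (wordGF (IsMotzkinFrom (t + 1)) +
      wordGF (IsMotzkinFrom (t + 2)) + wordGF (IsMotzkinFrom t)) := by
  conv_lhs => rw [wordGF_eq_ite_add, if_neg ((isMotzkinFrom_nil _).not.2 t.succ_ne_zero), zero_add,
    Fintype.sum_option, Fintype.sum_bool, ← add_assoc]
  rfl

theorem wordGF_isMotzkinFrom (t : ℕ) :
    wordGF (IsMotzkinFrom t) = motzkinGF * (X * motzkinGF) ^ t := by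
  let D : ℕ → PowerSeries ℚ := fun t =>
    X * motzkinGF * wordGF (IsMotzkinFrom t) - wordGF (IsMotzkinFrom (t + 1))
  have hmem : ∀ t, D t ∈ Ideal.span (Set.range D) := fun t =>
    Ideal.subset_span (Set.mem_range_self t)
  have hD : ∀ t, ∃ E ∈ Ideal.span (Set.range D), D t = X * E := by
    rintro (_ | t)
    · refine ⟨_, add_mem (hmem 0) (hmem 1), ?_⟩
      simp only [D, motzkinGF_eq_wordGF]
      linear_combination (X * wordGF (IsMotzkinFrom 0)) * wordGF_isMotzkinFrom_zero -
        wordGF_isMotzkinFrom_succ 0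
    · refine ⟨_, add_mem (add_mem (hmem t) (hmem (t + 1))) (hmem (t + 2)), ?_⟩
      simp only [D]
      linear_combination X * motzkinGF * wordGF_isMotzkinFrom_succ t -
        wordGF_isMotzkinFrom_succ (t + 1)
  induction t with
  | zero => rw [motzkinGF_eq_wordGF, pow_zero, mul_one]
  | succ t ih => rw [← sub_eq_zero.1 (eq_zero_of_forall_eq_X_mul hD t), ih]; ring

theorem motzkinGF_eq : motzkinGF = 1 + X * motzkinGF + X ^ 2 * motzkinGF ^ 2 := by
  have h := wordGF_isMotzkinFrom_zero
  rw [wordGF_isMotzkinFrom, wordGF_isMotzkinFrom] at h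
  linear_combination h

theorem wordGF_isGapPath_one_zero (t : ℕ) : wordGF (IsGapPath 1 0 t) = (X * motzkinGF) ^ t := by
  rw [wordGF_eq_ite_add, Fintype.sum_option, Fintype.sum_bool]
  simp only [isGapPath_zero_none_cons, isGapPath_zero_up_cons, not_isGapPath_zero_zero,
    wordGF_false, zero_add]
  cases t with
  | zero => simp [isGapPath_nil, gap, not_isGapPath_down_cons, wordGF_false]
  | succ t =>
    simp only [isGapPath_nil, isGapPath_zero_succ_down_cons, Nat.succ_ne_zero, false_and, and_true,
      if_false, wordGF_isMotzkinFrom]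
    ring

theorem wordGF_isGapPath_succ_zero (s t : ℕ) : wordGF (IsGapPath (s + 2) 0 t) =
    X * (wordGF (IsGapPath (s + 1) 0 t) + wordGF (IsGapPath (s + 1) 0 (t + 1))) := by
  have hdown : ∀ w, ¬ IsGapPath (s + 2) 0 t (some false :: w) := by
    cases t <;> simp [not_isGapPath_down_cons, isGapPath_zero_succ_down_cons]
  rw [wordGF_eq_ite_add, Fintype.sum_option, Fintype.sum_bool]
  simp [isGapPath_nil, gap, isGapPath_zero_none_cons, isGapPath_zero_up_cons, hdown, wordGF_false]

theorem wordGF_isGapPath_succ_succ (s d t : ℕ) : wordGF (IsGapPath s (d + 1) (t + 1)) =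
    X * (wordGF (IsGapPath s (d + 1) (t + 1)) + wordGF (IsGapPath s (d + 1) (t + 2)) +
      wordGF (IsGapPath s d t)) := by
  conv_lhs => rw [wordGF_eq_ite_add, if_neg fun h => Nat.succ_ne_zero t h.1, zero_add,
    Fintype.sum_option, Fintype.sum_bool, ← add_assoc]
  rfl

theorem wordGF_isGapPath (s : ℕ) {d t : ℕ} (h : d ≤ t) : wordGF (IsGapPath (s + 1) d t) =
    X ^ s * (1 + X * motzkinGF) ^ s * (X * motzkinGF) ^ t := by
  induction d generalizing t with
  | zero =>
    induction s generalizing t with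
    | zero => simp [wordGF_isGapPath_one_zero]
    | succ s ih =>
      rw [wordGF_isGapPath_succ_zero, ih (Nat.zero_le _), ih (Nat.zero_le _)]
      ring
  | succ d ih =>
    let D : ℕ → PowerSeries ℚ := fun k => wordGF (IsGapPath (s + 1) (d + 1) (d + k + 1)) -
      X ^ s * (1 + X * motzkinGF) ^ s * (X * motzkinGF) ^ (d + k + 1)
    have hmem : ∀ k, D k ∈ Ideal.span (Set.range D) := fun k =>
      Ideal.subset_span (Set.mem_range_self k)
    have hD : ∀ k, ∃ E ∈ Ideal.span (Set.range D), D k = X * E := fun k => by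
      have hrec := wordGF_isGapPath_succ_succ (s + 1) d (d + k)
      rw [ih (Nat.le_add_right d k)] at hrec
      refine ⟨_, add_mem (hmem k) (hmem (k + 1)), ?_⟩
      simp only [D]
      linear_combination hrec - X ^ (s + 1) * (1 + X * motzkinGF) ^ s *
        (X * motzkinGF) ^ (d + k) * motzkinGF_eq
    obtain ⟨k, rfl⟩ := Nat.exists_eq_add_of_le h
    rw [add_right_comm]
    exact sub_eq_zero.1 (eq_zero_of_forall_eq_X_mul hD k)

theorem IsMotzkinFrom.le_length {t : ℕ} {w : List (Option Bool)} (h : IsMotzkinFrom t w) :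
    t ≤ w.length := by
  have := h.count_down_eq
  have := List.count_le_length (a := some false) (l := w)
  omega

theorem ncard_gapPairs (N r s : ℕ) : ((gapPairs N r s).ncard : ℚ) =
    ∑ t ∈ Finset.range (N + 1),
      coeff N (wordGF (IsGapPath r t t) * wordGF (IsGapPath s t t)) := by
  have hU : gapPairs N r s = ⋃ t ∈ (Finset.range (N + 1) : Set ℕ),
      {x | x.1.length + x.2.length = N ∧ IsGapPath r t t x.1 ∧ IsGapPath s t t x.2} := by
    ext x
    simp only [gapPairs, Set.mem_ofPred_eq, Set.mem_iUnion, Finset.mem_coe, Finset.mem_range,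
      exists_prop]
    constructor
    · rintro ⟨hN, t, hP, hQ⟩
      exact ⟨t, by have := hP.1.le_length; omega, hN, hP, hQ⟩
    · rintro ⟨t, -, hN, h⟩
      exact ⟨hN, t, h⟩
  simp only [coeff_wordGF_mul_wordGF]
  rw [hU, (Finset.finite_toSet _).ncard_biUnion, finsum_mem_coe_finset, Nat.cast_sum]
  · exact fun t _ => finite_wordPairs _ _ N
  · rintro t - t' - hne
    rw [Function.onFun, Set.disjoint_left]
    rintro x ⟨-, hP, -⟩ ⟨-, hP', -⟩
    have := hP.1.count_down_eq
    have := hP'.1.count_down_eq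
    omega

theorem one_add_derivative_mul :
    (1 + X ^ 2 * PowerSeries.derivative ℚ (X * motzkinGF)) * (1 - (X * motzkinGF) ^ 2) = 1 := by
  have hm := motzkinGF_eq
  have hd := congrArg (PowerSeries.derivative ℚ) (show X * motzkinGF =
    X * (1 + X * motzkinGF + (X * motzkinGF) ^ 2) by linear_combination X * hm)
  have hX : PowerSeries.derivative ℚ (X : PowerSeries ℚ) = 1 := derivative_X
  rw [(PowerSeries.derivative ℚ).leibniz X (1 + X * motzkinGF + (X * motzkinGF) ^ 2), hX] at hd
  simp only [map_add, Derivation.leibniz_pow, smul_eq_mul, Derivation.map_one_eq_zero, zero_add,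
    nsmul_eq_mul, Nat.cast_ofNat, pow_one, mul_one, Nat.add_one_sub_one] at hd
  linear_combination X ^ 2 * motzkinGF * hd -
    X ^ 2 * (PowerSeries.derivative ℚ (X * motzkinGF) + motzkinGF) * hm

theorem coeff_mul_eq_sum_of_mul_one_sub_eq_one {R : Type*} [CommRing R] {f Z : PowerSeries R}
    (hZ : Z * (1 - f) = 1) (hf : X ∣ f) (g : PowerSeries R) (N : ℕ) :
    coeff N (g * Z) = ∑ t ∈ Finset.range (N + 1), coeff N (g * f ^ t) := by
  have hsum : g * Z = g * ∑ t ∈ Finset.range (N + 1), f ^ t + f ^ (N + 1) * (g * Z) := by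
    linear_combination g * (∑ t ∈ Finset.range (N + 1), f ^ t) * hZ -
      g * Z * mul_neg_geom_sum f (N + 1)
  have hdvd : X ^ (N + 1) ∣ f ^ (N + 1) * (g * Z) :=
    (pow_dvd_pow_of_dvd hf _).mul_right _
  rw [hsum, map_add, X_pow_dvd_iff.1 hdvd N N.lt_succ_self, add_zero, Finset.mul_sum, map_sum]

theorem dyckRS_eq_empty {n : ℕ} (h : n < 2) (r s : ℕ) : dyckRS n r s = ∅ := by
  rw [Set.eq_empty_iff_forall_notMem]
  rintro w ⟨-, i, hi, -⟩
  rw [Finset.mem_Icc] at hi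
  omega

theorem ncard_dyckRS_eq_coeff (N r s : ℕ) : ((dyckRS (N + 2) (r + 1) (s + 1)).ncard : ℚ) =
    coeff N (X ^ (r + s) * (1 + X * motzkinGF) ^ (r + s) *
      (1 + X ^ 2 * PowerSeries.derivative ℚ (X * motzkinGF))) := by
  rw [coeff_mul_eq_sum_of_mul_one_sub_eq_one one_add_derivative_mul
    ((dvd_mul_right X motzkinGF).trans (dvd_pow_self _ two_ne_zero)), ncard_dyckRS, ncard_gapPairs]
  refine Finset.sum_congr rfl fun t _ => ?_
  rw [wordGF_isGapPath r le_rfl, wordGF_isGapPath s le_rfl]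
  exact congrArg _ (by ring)

end GeneratingFunctions

open PowerSeries in
/-- **Corollary (generating function for `|𝒟ₙ^{r,s}|`).**
`Σ |𝒟ₙ^{r,s}| xⁿ = x^{r+s}·(1 + x·m(x))^{r+s-2}·(1 + x²·(x·m(x))′)`. -/
theorem dyckRS_gf (r s : ℕ) (hr : 1 ≤ r) (hs : 1 ≤ s) :
    PowerSeries.mk (fun n => ((dyckRS n r s).ncard : ℚ)) =
      X ^ (r + s) * (1 + X * motzkinGF) ^ (r + s - 2) *
        (1 + X ^ 2 * PowerSeries.derivative ℚ (X * motzkinGF)) := by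
  obtain ⟨r, rfl⟩ := Nat.exists_eq_add_of_le' hr
  obtain ⟨s, rfl⟩ := Nat.exists_eq_add_of_le' hs
  have hX : r + 1 + (s + 1) = 2 + (r + s) := by ring
  ext n
  rw [coeff_mk, hX, Nat.add_sub_cancel_left, pow_add, mul_assoc, mul_assoc,
    ← mul_assoc (X ^ (r + s)), coeff_X_pow_mul']
  split_ifs with hn
  · obtain ⟨N, rfl⟩ := Nat.exists_eq_add_of_le' hn
    rw [Nat.add_sub_cancel, ncard_dyckRS_eq_coeff]
  · rw [dyckRS_eq_empty (not_le.1 hn), Set.ncard_empty, Nat.cast_zero]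
end

section
/- For all integers r ≥ 1, s ≥ 1, and n ≥ r+s, the number of Dyck paths D ∈ D_n^{r,s} that have exactly two returns equals T_{n-2, r+s-1}. -/
/-!
Call an index `i` with `rᵢ, sᵢ > 0` a star. Every return `k < n` is a star, so a path in `𝒟ₙ^{r,s}`
with two returns is a concatenation of two Dyck paths without stars, `r` being the final descent of
the first and `s` the initial ascent of the second.

A Dyck path of semilength `m + 1` without stars is the same thing as a Motzkin path of length `m`,
whose `i`-th step is up if `sᵢ > 0`, down if `rᵢ > 0`, and horizontal if both vanish. The initial
ascent exceeds by one the number of steps before the first down step of the Motzkin path, and so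
does the final descent for the reversed Motzkin path.

So we count pairs of Motzkin paths of total length `n - 2` with `r - 1` and `s - 1` steps before
their first down steps. Inserting the second path just before the first down step of the first gives
a Motzkin path of length `n - 2` with `r + s - 2` such steps; the second path is recovered as what
follows the first `r - 1` steps, up to the first descent below its starting height.
-/

section Letters

variable {α : Type*} [BEq α] {w : List α} {x : α} {a b i k : ℕ}

theorem lt_countBefore_iff :
    i < w.countBefore x k ↔ i < w.count x ∧ w.idxOfNth x i < k := by
  induction w generalizing i k with
  | nil => simp
  | cons c w ih =>
    cases k with
    | zero => simp
    | succ k =>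
      rw [List.countBefore_cons_succ, List.idxOfNth_cons, List.count_cons]
      have ih_pred := @ih (i - 1) k
      have ih_same := @ih i k
      grind

theorem countBefore_eq_zero_iff (hk : k ≤ w.length) :
    w.countBefore x k = 0 ↔ k ≤ w.idxOf x := by
  have hpos : 0 < w.countBefore x k ↔ _ := lt_countBefore_iff
  have hlen : w.idxOfNth x 0 < w.length ↔ _ := List.idxOfNth_lt_length_iff
  rw [← List.idxOfNth_zero]
  lia

theorem countBefore_idxOfNth_of_le_count (hi : i ≤ w.count x) :
    w.countBefore x (w.idxOfNth x i) = i := by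
  rcases hi.lt_or_eq with hlt | rfl
  · exact List.countBefore_idxOfNth_of_lt_count hlt
  · rw [List.idxOfNth_eq_length_of_ge_count le_rfl, List.countBefore_of_ge_length le_rfl]

theorem countBefore_append (w₁ w₂ : List α) (x : α) (k : ℕ) :
    (w₁ ++ w₂).countBefore x k = w₁.countBefore x k + w₂.countBefore x (k - w₁.length) := by
  simp only [List.countBefore_eq_count_take, List.take_append, List.count_append]

theorem forall_countBefore_append_le_iff (w₁ w₂ : List α)
    (x y : α) (m n : ℕ) :
    (∀ k, m + (w₁ ++ w₂).countBefore x k ≤ n + (w₁ ++ w₂).countBefore y k) ↔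
      (∀ k, m + w₁.countBefore x k ≤ n + w₁.countBefore y k) ∧
        ∀ k, m + w₁.count x + w₂.countBefore x k ≤ n + w₁.count y + w₂.countBefore y k := by
  simp only [List.countBefore_eq_count_take]
  refine ⟨fun h => ⟨fun k => ?_, fun k => ?_⟩, fun ⟨h₁, h₂⟩ k => ?_⟩
  · have hmin := h (min k w₁.length)
    rwa [List.take_append_of_le_length (min_le_right ..), ← List.take_eq_take_min] at hmin
  · have hlater := h (w₁.length + k)
    rwa [List.take_length_add_append, List.count_append, List.count_append, ← add_assoc,
      ← add_assoc] at hlater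
  · rcases le_total k w₁.length with hk | hk
    · rw [List.take_append_of_le_length hk]
      exact h₁ k
    · obtain ⟨k, rfl⟩ := Nat.exists_eq_add_of_le hk
      rw [List.take_length_add_append, List.count_append, List.count_append, ← add_assoc,
        ← add_assoc]
      exact h₂ k

theorem monotone_countBefore (w : List α) (x : α) : Monotone (w.countBefore x) :=
  fun _ _ h => List.countPBefore_mono h

theorem countBefore_succ [LawfulBEq α] [DecidableEq α] (w : List α) (x : α) (k : ℕ) :
    w.countBefore x (k + 1) = w.countBefore x k + if w[k]? = some x then 1 else 0 := by
  simp only [List.countBefore_eq_count_take, List.take_add_one, List.count_append]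
  cases w[k]? <;> simp [List.count_singleton]

theorem countBefore_eq_of_forall_ne [LawfulBEq α] (hab : a ≤ b)
    (h : ∀ k, a ≤ k → k < b → w[k]? ≠ some x) : w.countBefore x b = w.countBefore x a := by
  classical
  induction b, hab using Nat.le_induction with
  | base => rfl
  | succ b hab ih =>
    rw [countBefore_succ, if_neg (h b hab b.lt_succ_self), add_zero,
      ih fun k hak hkb => h k hak (hkb.trans b.lt_succ_self)]

theorem idxOfNth_append_left {w₁ : List α} (w₂ : List α) (h : i < w₁.count x) :
    (w₁ ++ w₂).idxOfNth x i = w₁.idxOfNth x i := by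
  induction w₁ generalizing i with
  | nil => simp at h
  | cons c w ih => grind

theorem idxOfNth_append_right (w₁ w₂ : List α) (x : α) (i : ℕ) :
    (w₁ ++ w₂).idxOfNth x (w₁.count x + i) = w₁.length + w₂.idxOfNth x i := by
  induction w₁ with
  | nil => simp
  | cons c w ih => grind

theorem count_drop_take (h : a ≤ b) :
    ((w.take b).drop a).count x = w.countBefore x b - w.countBefore x a := by
  have split := congrArg (List.count x) (List.take_append_drop a (w.take b))
  rw [List.count_append, List.take_take, min_eq_left h] at split
  simp only [List.countBefore_eq_count_take]
  lia

theorem countBefore_true_add_countBefore_false {w : List Bool} (hk : k ≤ w.length) :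
    w.countBefore true k + w.countBefore false k = k := by
  simp only [List.countBefore_eq_count_take, List.count_true_add_count_false,
    List.length_take, min_eq_left hk]

theorem ext_idxOfNth_true {w w' : List Bool} (hlen : w.length = w'.length)
    (h : ∀ i, w.idxOfNth true i = w'.idxOfNth true i) : w = w' := by
  refine List.ext_getElem hlen fun k hk hk' => Bool.eq_iff_iff.2 ?_
  rw [← beq_true w[k], ← beq_true w'[k], List.beq_iff_exists_findIdxNth,
    List.beq_iff_exists_findIdxNth]
  simp only [h]

theorem getD_idxsOf (h : i < w.count x) : (w.idxsOf x).getD i 0 = w.idxOfNth x i := by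
  have hlen : i < (w.idxsOf x).length := by rwa [List.length_idxsOf]
  rw [List.getD_eq_getElem _ _ hlen, List.getElem_idxOf_eq_idxOfNth]

end Letters

section Profile

/-- `profile x w i` is the number of letters `!x` that precede the `i`-th letter `x` of `w`, with
`i` counted from `0`; it is the number of all letters `!x` when `w` has at most `i` letters `x`. -/
def profile (x : Bool) (w : List Bool) (i : ℕ) : ℕ := w.countBefore (!x) (w.idxOfNth x i)

variable {x : Bool} {w : List Bool} {i j : ℕ}

theorem monotone_profile (x : Bool) (w : List Bool) : Monotone (profile x w) :=
  fun _ _ h => monotone_countBefore w (!x) (List.idxOfNth_mono h)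

theorem profile_le_count (x : Bool) (w : List Bool) (i : ℕ) : profile x w i ≤ w.count (!x) :=
  List.countBefore_le_count

theorem idxOfNth_ne_idxOfNth_not (hi : i < w.count x) :
    w.idxOfNth x i ≠ w.idxOfNth (!x) j := by
  intro heq
  have hx := List.idxOfNth_lt_length_of_lt_count hi
  have hletter : w[w.idxOfNth x i] = !x := by
    simpa only [heq] using List.getElem_idxOfNth_eq (h := heq ▸ hx)
  rw [List.getElem_idxOfNth_eq] at hletter
  simp at hletter

theorem lt_profile_iff (hi : i < w.count x) (hj : j < w.count (!x)) :
    j < profile x w i ↔ profile (!x) w j ≤ i := by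
  have hne := idxOfNth_ne_idxOfNth_not (j := j) hi
  have hleft : j < profile x w i ↔ w.idxOfNth (!x) j < w.idxOfNth x i := by
    rw [profile, lt_countBefore_iff, and_iff_right hj]
  have hright : i < profile (!x) w j ↔ w.idxOfNth x i < w.idxOfNth (!x) j := by
    rw [profile, Bool.not_not, lt_countBefore_iff, and_iff_right hi]
  lia

theorem profile_lt_profile_succ_iff (hi : i + 1 < w.count x) :
    profile x w i < profile x w (i + 1) ↔ ∃ j < w.count (!x), profile (!x) w j = i + 1 := by
  constructor
  · intro hjump
    have hj : profile x w i < w.count (!x) := hjump.trans_le (profile_le_count x w _)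
    refine ⟨_, hj, le_antisymm ((lt_profile_iff hi hj).1 hjump) ?_⟩
    have := (lt_profile_iff (i.lt_succ_self.trans hi) hj).not.1 (lt_irrefl _)
    lia
  · rintro ⟨j, hj, heq⟩
    have hlow := (lt_profile_iff (i.lt_succ_self.trans hi) hj).not.2 (by lia)
    have hhigh := (lt_profile_iff hi hj).2 heq.le
    lia

theorem idxOfNth_eq_add_profile (hi : i < w.count x) : w.idxOfNth x i = i + profile x w i := by
  have hle : w.idxOfNth x i ≤ w.length := List.idxOfNth_le_length
  have hsum := countBefore_true_add_countBefore_false hle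
  have hself := List.countBefore_idxOfNth_of_lt_count hi
  cases x <;> simp only [profile, Bool.not_true, Bool.not_false] <;> lia

theorem ext_profile_true {w' : List Bool} (htrue : w.count true = w'.count true)
    (hfalse : w.count false = w'.count false)
    (h : ∀ i < w.count true, profile true w i = profile true w' i) : w = w' := by
  have hlen : w.length = w'.length := by
    rw [← List.count_true_add_count_false, htrue, hfalse, List.count_true_add_count_false]
  refine ext_idxOfNth_true hlen fun i => ?_
  rcases lt_or_ge i (w.count true) with hi | hi
  · rw [idxOfNth_eq_add_profile hi, idxOfNth_eq_add_profile (htrue ▸ hi), h i hi]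
  · rw [List.idxOfNth_eq_length_of_ge_count hi, List.idxOfNth_eq_length_of_ge_count (htrue ▸ hi),
      hlen]

theorem profile_append_left {w₁ : List Bool} (w₂ : List Bool) (hi : i < w₁.count x) :
    profile x (w₁ ++ w₂) i = profile x w₁ i := by
  have hlen := List.idxOfNth_le_length (xs := w₁) (x := x) (n := i)
  rw [profile, idxOfNth_append_left w₂ hi, countBefore_append, Nat.sub_eq_zero_of_le hlen,
    List.countBefore_zero, add_zero, profile]

theorem profile_append_right (x : Bool) (w₁ w₂ : List Bool) (i : ℕ) :
    profile x (w₁ ++ w₂) (w₁.count x + i) = w₁.count (!x) + profile x w₂ i := by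
  rw [profile, idxOfNth_append_right, countBefore_append, Nat.add_sub_cancel_left,
    List.countBefore_of_ge_length (Nat.le_add_right ..), profile]

theorem count_between_idxsOf (hi : i + 1 < w.count x) :
    ((w.take ((w.idxsOf x).getD (i + 1) 0)).drop ((w.idxsOf x).getD i 0 + 1)).count (!x) =
      profile x w (i + 1) - profile x w i := by
  have hlt : w.idxOfNth x i < w.idxOfNth x (i + 1) :=
    (List.idxOfNth_lt_idxOfNth_iff_of_lt_count (by lia)).2 i.lt_succ_self
  have hlen := List.idxOfNth_lt_length_of_lt_count hi
  rw [getD_idxsOf hi, getD_idxsOf (by lia), count_drop_take hlt, profile, profile]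
  congr 1
  simp only [List.countBefore_eq_count_take]
  rw [← List.take_concat_get' w (w.idxOfNth x i) (by lia), List.getElem_idxOfNth_eq,
    List.count_append]
  simp

theorem rStat_succ_s8 (hi : i + 1 < w.count true) :
    rStat w (i + 1) = profile true w (i + 1) - profile true w i :=
  count_between_idxsOf hi

theorem sStat_succ_s8 (hi : i + 1 < w.count false) :
    sStat w (i + 1) = profile false w (i + 1) - profile false w i :=
  count_between_idxsOf hi

theorem rStat_succ_pos_iff (hi : i + 1 < w.count true) :
    0 < rStat w (i + 1) ↔ profile true w i < profile true w (i + 1) := by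
  rw [rStat_succ_s8 hi, Nat.sub_pos_iff_lt]

theorem sStat_succ_pos_iff (hi : i + 1 < w.count false) :
    0 < sStat w (i + 1) ↔ profile false w i < profile false w (i + 1) := by
  rw [sStat_succ_s8 hi, Nat.sub_pos_iff_lt]

end Profile

section Dyck

variable {w w₁ w₂ : List Bool} {a b i k n : ℕ}

theorem isDyckWord_iff_profile :
    IsDyckWord n w ↔ w.count true = n ∧ w.count false = n ∧ ∀ i < n, profile true w i ≤ i := by
  constructor
  · rintro ⟨-, htrue, hfalse, hprefix⟩
    refine ⟨htrue, hfalse, fun i hi => ?_⟩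
    have hle := hprefix _ (List.take_prefix (w.idxOfNth true i) w)
    rwa [← List.countBefore_eq_count_take, ← List.countBefore_eq_count_take,
      List.countBefore_idxOfNth_of_lt_count (htrue ▸ hi)] at hle
  · rintro ⟨htrue, hfalse, hprofile⟩
    refine ⟨by rw [← List.count_true_add_count_false, htrue, hfalse, two_mul], htrue, hfalse, ?_⟩
    intro p hp
    rw [List.prefix_iff_eq_take.1 hp, ← List.countBefore_eq_count_take,
      ← List.countBefore_eq_count_take]
    by_contra! hlt
    have hlt_n := hlt.trans_le (hfalse ▸ List.countBefore_le_count)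
    have hle : p.length ≤ w.idxOfNth true (w.countBefore true p.length) := by
      by_contra! hidx
      exact lt_irrefl _ (lt_countBefore_iff.2 ⟨htrue ▸ hlt_n, hidx⟩)
    exact (hlt.trans_le (monotone_countBefore w false hle)).not_ge (hprofile _ hlt_n)

theorem bounds_of_mem_returns (hk : k ∈ returns n w) : 1 ≤ k ∧ k ≤ n :=
  Finset.mem_Icc.1 (Finset.mem_filter.1 hk).1

namespace IsDyckWord

theorem count_eq (hw : IsDyckWord n w) (x : Bool) : w.count x = n := by
  cases x
  exacts [hw.2.2.1, hw.2.1]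

theorem profile_true_le (hw : IsDyckWord n w) (hi : i < n) : profile true w i ≤ i :=
  (isDyckWord_iff_profile.1 hw).2.2 i hi

theorem lt_profile_false (hw : IsDyckWord n w) (hi : i < n) : i < profile false w i := by
  have hit : i < w.count true := hw.count_eq true ▸ hi
  have hif : i < w.count false := hw.count_eq false ▸ hi
  exact lt_of_not_ge fun h => ((lt_profile_iff hit hif).2 h).not_ge (hw.profile_true_le hi)

theorem append (hw₁ : IsDyckWord a w₁) (hw₂ : IsDyckWord b w₂) :
    IsDyckWord (a + b) (w₁ ++ w₂) := by
  refine isDyckWord_iff_profile.2 ⟨?_, ?_, fun i hi => ?_⟩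
  · rw [List.count_append, hw₁.count_eq, hw₂.count_eq]
  · rw [List.count_append, hw₁.count_eq, hw₂.count_eq]
  · rcases lt_or_ge i a with hia | hai
    · rw [profile_append_left w₂ (hw₁.count_eq true ▸ hia)]
      exact hw₁.profile_true_le hia
    · obtain ⟨j, rfl⟩ := Nat.exists_eq_add_of_le hai
      have happend := profile_append_right true w₁ w₂ j
      rw [hw₁.count_eq, hw₁.count_eq] at happend
      have := hw₂.profile_true_le (i := j) (by lia)
      lia

theorem exists_append_eq_of_mem_returns (hw : IsDyckWord n w) (hk : k ∈ returns n w) :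
    ∃ w₁ w₂, IsDyckWord k w₁ ∧ IsDyckWord (n - k) w₂ ∧ w₁ ++ w₂ = w := by
  obtain ⟨-, hbalanced⟩ := Finset.mem_filter.1 hk
  obtain ⟨-, hkn⟩ := bounds_of_mem_returns hk
  obtain ⟨hlen, htrue, hfalse, hprefix⟩ := hw
  have hsplit := List.take_append_drop (2 * k) w
  have hlen_take : (w.take (2 * k)).length = 2 * k := by
    rw [List.length_take]
    lia
  have hsum := List.count_true_add_count_false (w.take (2 * k))
  have hcount (x : Bool) : (w.take (2 * k)).count x + (w.drop (2 * k)).count x = w.count x := by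
    rw [← List.count_append, hsplit]
  have htrue_add := hcount true
  have hfalse_add := hcount false
  refine ⟨w.take (2 * k), w.drop (2 * k), ⟨hlen_take, by lia, by lia, fun p hp => ?_⟩,
    ⟨?_, by lia, by lia, fun p hp => ?_⟩, hsplit⟩
  · exact hprefix p (hp.trans (List.take_prefix ..))
  · rw [List.length_drop]
    lia
  · have hle := hprefix (w.take (2 * k) ++ p) (by
      conv_rhs => rw [← hsplit]
      exact (List.prefix_append_right_inj _).2 hp)
    rw [List.count_append, List.count_append] at hle
    lia

theorem mem_returns_append (hw₁ : IsDyckWord (a + 1) w₁) (hn : a + 1 ≤ n) :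
    a + 1 ∈ returns n (w₁ ++ w₂) := by
  rw [returns, Finset.mem_filter, Finset.mem_Icc, ← hw₁.1, List.take_left', hw₁.count_eq,
    hw₁.count_eq]
  · exact ⟨⟨by lia, hn⟩, rfl⟩
  · rfl

theorem self_mem_returns (hw : IsDyckWord (a + 1) w) : a + 1 ∈ returns (a + 1) w := by
  simpa only [List.append_nil] using mem_returns_append (w₂ := []) hw le_rfl

end IsDyckWord

end Dyck

section GradedProd

variable {α β γ δ : Type*}

/-- The pairs from `A a × B b` with `a + b = m`, where `A` and `B` are families of sets graded by
size. -/
def gradedProd (A : ℕ → Set α) (B : ℕ → Set β) (m : ℕ) : Set (α × β) :=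
  {p | ∃ a b, a + b = m ∧ p.1 ∈ A a ∧ p.2 ∈ B b}

theorem bijOn_prodMap_gradedProd {f : α → γ} {g : β → δ} {A : ℕ → Set α} {A' : ℕ → Set γ}
    {B : ℕ → Set β} {B' : ℕ → Set δ} (hf : ∀ a, Set.BijOn f (A a) (A' a))
    (hg : ∀ b, Set.BijOn g (B b) (B' b)) (hA' : Pairwise (Function.onFun Disjoint A')) (m : ℕ) :
    Set.BijOn (Prod.map f g) (gradedProd A B m) (gradedProd A' B' m) := by
  refine ⟨?_, ?_, ?_⟩
  · rintro p ⟨a, b, hm, ha, hb⟩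
    exact ⟨a, b, hm, (hf a).mapsTo ha, (hg b).mapsTo hb⟩
  · rintro p ⟨a, b, hm, ha, hb⟩ p' ⟨a', b', hm', ha', hb'⟩ heq
    obtain ⟨hf_eq, hg_eq⟩ := Prod.ext_iff.1 heq
    rw [Prod.map_fst, Prod.map_fst] at hf_eq
    obtain rfl : a = a' := hA'.eq <| Set.not_disjoint_iff.2
      ⟨f p.1, (hf a).mapsTo ha, hf_eq ▸ (hf a').mapsTo ha'⟩
    obtain rfl : b = b' := by lia
    exact Prod.ext ((hf a).injOn ha ha' hf_eq) ((hg b).injOn hb hb' hg_eq)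
  · rintro ⟨x, y⟩ ⟨a, b, hm, hx, hy⟩
    obtain ⟨x, hx, rfl⟩ := (hf a).surjOn hx
    obtain ⟨y, hy, rfl⟩ := (hg b).surjOn hy
    exact ⟨(x, y), ⟨a, b, hm, ‹x ∈ A a›, ‹y ∈ B b›⟩, rfl⟩

end GradedProd

section Factorization

variable {w w₁ w₂ : List Bool} {a b i j k n r s : ℕ}

/-- `IsStar w i` says that both `rᵢ` and `sᵢ` are positive: `dyckL n 1` consists of the Dyck paths
without such an index `1 ≤ i < n`, and `dyckRS n r s` of paths with exactly one. -/
def IsStar (w : List Bool) (i : ℕ) : Prop := 0 < rStat w i ∧ 0 < sStat w i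

/-- The number of letters `d` after the last `u`. -/
def finalDescent (w : List Bool) : ℕ := w.count false - profile true w (w.count true - 1)

theorem mem_dyckL_one_iff :
    w ∈ dyckL n 1 ↔ IsDyckWord n w ∧ ∀ i ∈ Finset.Icc 1 (n - 1), ¬ IsStar w i := by
  refine and_congr_right fun _ => ?_
  rw [LStat, Finset.prod_eq_one_iff]
  refine forall₂_congr fun i _ => ?_
  rw [Nat.choose_eq_one_iff, IsStar]
  lia

theorem rStat_append_left (w₂ : List Bool) (hi : i + 1 < w₁.count true) :
    rStat (w₁ ++ w₂) (i + 1) = rStat w₁ (i + 1) := by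
  rw [rStat_succ_s8 (by rw [List.count_append]; lia), rStat_succ_s8 hi, profile_append_left w₂ hi,
    profile_append_left w₂ (by lia)]

theorem sStat_append_left (w₂ : List Bool) (hi : i + 1 < w₁.count false) :
    sStat (w₁ ++ w₂) (i + 1) = sStat w₁ (i + 1) := by
  rw [sStat_succ_s8 (by rw [List.count_append]; lia), sStat_succ_s8 hi, profile_append_left w₂ hi,
    profile_append_left w₂ (by lia)]

theorem rStat_append_right (w₁ : List Bool) (hi : i + 1 < w₂.count true) :
    rStat (w₁ ++ w₂) (w₁.count true + (i + 1)) = rStat w₂ (i + 1) := by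
  rw [← add_assoc, rStat_succ_s8 (by rw [List.count_append]; lia), rStat_succ_s8 hi, add_assoc,
    profile_append_right, profile_append_right, Nat.add_sub_add_left]

theorem sStat_append_right (w₁ : List Bool) (hi : i + 1 < w₂.count false) :
    sStat (w₁ ++ w₂) (w₁.count false + (i + 1)) = sStat w₂ (i + 1) := by
  rw [← add_assoc, sStat_succ_s8 (by rw [List.count_append]; lia), sStat_succ_s8 hi, add_assoc,
    profile_append_right, profile_append_right, Nat.add_sub_add_left]

namespace IsDyckWord

theorem profile_true_zero (hw : IsDyckWord (b + 1) w) : profile true w 0 = 0 :=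
  Nat.le_zero.1 (hw.profile_true_le b.succ_pos)

theorem profile_false_zero (hw : IsDyckWord (b + 1) w) : profile false w 0 = w.idxOf false := by
  have hpos : 0 < w.count false := hw.count_eq false ▸ b.succ_pos
  rw [← List.idxOfNth_zero, idxOfNth_eq_add_profile hpos, zero_add]

theorem profile_false_last (hw : IsDyckWord (a + 1) w) : profile false w a = a + 1 :=
  le_antisymm ((profile_le_count ..).trans_eq (hw.count_eq true))
    (hw.lt_profile_false a.lt_succ_self)

theorem finalDescent_eq (hw : IsDyckWord (a + 1) w) :
    finalDescent w = a + 1 - profile true w a := by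
  rw [finalDescent, hw.count_eq, hw.count_eq, Nat.add_sub_cancel]

theorem rStat_append_mid (hw₁ : IsDyckWord (a + 1) w₁) (hw₂ : IsDyckWord (b + 1) w₂) :
    rStat (w₁ ++ w₂) (a + 1) = finalDescent w₁ := by
  have happend := profile_append_right true w₁ w₂ 0
  rw [add_zero, hw₁.count_eq, hw₂.profile_true_zero, add_zero] at happend
  rw [rStat_succ_s8, happend, profile_append_left, hw₁.finalDescent_eq, Bool.not_true, hw₁.count_eq]
  · rw [hw₁.count_eq]
    exact a.lt_succ_self
  · rw [(hw₁.append hw₂).count_eq]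
    lia

theorem sStat_append_mid (hw₁ : IsDyckWord (a + 1) w₁) (hw₂ : IsDyckWord (b + 1) w₂) :
    sStat (w₁ ++ w₂) (a + 1) = w₂.idxOf false := by
  have happend := profile_append_right false w₁ w₂ 0
  rw [add_zero, hw₁.count_eq, Bool.not_false, hw₁.count_eq, hw₂.profile_false_zero] at happend
  rw [sStat_succ_s8, happend, profile_append_left, hw₁.profile_false_last, Nat.add_sub_cancel_left]
  · rw [hw₁.count_eq]
    exact a.lt_succ_self
  · rw [(hw₁.append hw₂).count_eq]
    lia

theorem isStar_append_mid (hw₁ : IsDyckWord (a + 1) w₁) (hw₂ : IsDyckWord (b + 1) w₂) :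
    IsStar (w₁ ++ w₂) (a + 1) := by
  rw [IsStar, hw₁.rStat_append_mid hw₂, hw₁.sStat_append_mid hw₂, hw₁.finalDescent_eq,
    ← hw₂.profile_false_zero]
  have := hw₁.profile_true_le a.lt_succ_self
  exact ⟨by lia, hw₂.lt_profile_false b.succ_pos⟩

theorem isStar_append_left_iff (hw₁ : IsDyckWord (a + 1) w₁) (hi : i ∈ Finset.Icc 1 a) :
    IsStar (w₁ ++ w₂) i ↔ IsStar w₁ i := by
  obtain ⟨hi_pos, hia⟩ := Finset.mem_Icc.1 hi
  obtain ⟨i, rfl⟩ := Nat.exists_eq_add_of_le' hi_pos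
  have hcount (x : Bool) : i + 1 < w₁.count x := by
    rw [hw₁.count_eq]
    lia
  rw [IsStar, IsStar, rStat_append_left w₂ (hcount true), sStat_append_left w₂ (hcount false)]

theorem isStar_append_right_iff (hw₁ : IsDyckWord a w₁) (hw₂ : IsDyckWord (b + 1) w₂)
    (hi : i ∈ Finset.Icc 1 b) : IsStar (w₁ ++ w₂) (a + i) ↔ IsStar w₂ i := by
  obtain ⟨hi_pos, hib⟩ := Finset.mem_Icc.1 hi
  obtain ⟨i, rfl⟩ := Nat.exists_eq_add_of_le' hi_pos
  have hcount (x : Bool) : i + 1 < w₂.count x := by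
    rw [hw₂.count_eq]
    lia
  have hr := rStat_append_right w₁ (hcount true)
  have hs := sStat_append_right w₁ (hcount false)
  rw [hw₁.count_eq] at hr hs
  rw [IsStar, IsStar, hr, hs]

theorem append_mem_dyckRS_iff (hw₁ : IsDyckWord (a + 1) w₁) (hw₂ : IsDyckWord (b + 1) w₂)
    (hn : a + 1 + (b + 1) = n) :
    w₁ ++ w₂ ∈ dyckRS n r s ↔
      (w₁ ∈ dyckL (a + 1) 1 ∧ finalDescent w₁ = r) ∧
        w₂ ∈ dyckL (b + 1) 1 ∧ w₂.idxOf false = s := by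
  subst hn
  have hmid : IsStar (w₁ ++ w₂) (a + 1) := hw₁.isStar_append_mid hw₂
  have hmid_mem : a + 1 ∈ Finset.Icc 1 (a + 1 + (b + 1) - 1) := Finset.mem_Icc.2 (by lia)
  rw [mem_dyckL_one_iff, mem_dyckL_one_iff, ← hw₁.rStat_append_mid hw₂, ← hw₁.sStat_append_mid hw₂]
  constructor
  · rintro ⟨-, i, -, -, hr, hs, huniq⟩
    obtain rfl := huniq _ hmid_mem hmid
    refine ⟨⟨⟨hw₁, fun j hj hstar => ?_⟩, hr⟩, ⟨hw₂, fun j hj hstar => ?_⟩, hs⟩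
    · have hj' := Finset.mem_Icc.1 hj
      have := huniq j (Finset.mem_Icc.2 (by lia)) ((hw₁.isStar_append_left_iff hj).2 hstar)
      lia
    · have hj' := Finset.mem_Icc.1 hj
      have := huniq (a + 1 + j) (Finset.mem_Icc.2 (by lia))
        ((hw₁.isStar_append_right_iff hw₂ hj).2 hstar)
      lia
  · rintro ⟨⟨⟨-, hfree₁⟩, hr⟩, ⟨-, hfree₂⟩, hs⟩
    refine ⟨hw₁.append hw₂, a + 1, hmid_mem, hmid, hr, hs, fun j hj hstar => ?_⟩
    have hj' := Finset.mem_Icc.1 hj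
    rcases lt_trichotomy j (a + 1) with hlt | heq | hgt
    · have hj₁ : j ∈ Finset.Icc 1 a := Finset.mem_Icc.2 (by lia)
      exact absurd ((hw₁.isStar_append_left_iff hj₁).1 hstar) (hfree₁ j hj₁)
    · exact heq
    · obtain ⟨j, rfl⟩ := Nat.exists_eq_add_of_le hgt.le
      have hj₂ : j ∈ Finset.Icc 1 b := Finset.mem_Icc.2 (by lia)
      exact absurd ((hw₁.isStar_append_right_iff hw₂ hj₂).1 hstar) (hfree₂ j hj₂)

theorem isStar_of_mem_returns (hw : IsDyckWord n w) (hk : k ∈ returns n w) (hkn : k < n) :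
    IsStar w k := by
  obtain ⟨w₁, w₂, hw₁, hw₂, rfl⟩ := hw.exists_append_eq_of_mem_returns hk
  obtain ⟨hk_pos, -⟩ := bounds_of_mem_returns hk
  obtain ⟨a, rfl⟩ := Nat.exists_eq_add_of_le' hk_pos
  obtain ⟨b, rfl⟩ := Nat.exists_eq_add_of_lt hkn
  rw [add_assoc, Nat.add_sub_cancel_left] at hw₂
  exact hw₁.isStar_append_mid hw₂

end IsDyckWord

theorem eq_of_mem_returns_of_mem_dyckRS (hw : w ∈ dyckRS n r s) (hj : j ∈ returns n w)
    (hjn : j < n) (hk : k ∈ returns n w) (hkn : k < n) : j = k := by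
  obtain ⟨hdyck, i, -, -, -, -, huniq⟩ := hw
  have hstar {l : ℕ} (hl : l ∈ returns n w) (hln : l < n) : l = i := by
    have hl_pos := (bounds_of_mem_returns hl).1
    exact huniq l (Finset.mem_Icc.2 (by lia)) (hdyck.isStar_of_mem_returns hl hln)
  rw [hstar hj hjn, hstar hk hkn]

theorem card_returns_eq_two_iff (hw : w ∈ dyckRS (n + 1) r s) :
    (returns (n + 1) w).card = 2 ↔ ∃ k ∈ returns (n + 1) w, k < n + 1 := by
  have hself : n + 1 ∈ returns (n + 1) w := hw.1.self_mem_returns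
  have hle {k : ℕ} (hk : k ∈ returns (n + 1) w) : k ≤ n + 1 :=
    (bounds_of_mem_returns hk).2
  constructor
  · intro hcard
    obtain ⟨k, hk, hne⟩ := Finset.exists_mem_ne (hcard ▸ one_lt_two) (n + 1)
    exact ⟨k, hk, (hle hk).lt_of_ne hne⟩
  · rintro ⟨k, hk, hkn⟩
    refine Finset.card_eq_two.2 ⟨k, n + 1, hkn.ne, ?_⟩
    ext j
    rw [Finset.mem_insert, Finset.mem_singleton]
    constructor
    · exact fun hj => (hle hj).lt_or_eq.imp_left
        fun hjn => eq_of_mem_returns_of_mem_dyckRS hw hj hjn hk hkn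
    · rintro (rfl | rfl)
      exacts [hk, hself]

theorem bijOn_append_dyckRS (r s m : ℕ) :
    Set.BijOn (fun p : List Bool × List Bool => p.1 ++ p.2)
      (gradedProd (fun a => {w | w ∈ dyckL (a + 1) 1 ∧ finalDescent w = r})
        (fun b => {w | w ∈ dyckL (b + 1) 1 ∧ w.idxOf false = s}) m)
      {w | w ∈ dyckRS (m + 2) r s ∧ (returns (m + 2) w).card = 2} := by
  refine ⟨?_, ?_, ?_⟩
  · rintro ⟨w₁, w₂⟩ ⟨a, b, hm, hw₁, hw₂⟩
    have hw : w₁ ++ w₂ ∈ dyckRS (m + 2) r s :=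
      (hw₁.1.1.append_mem_dyckRS_iff hw₂.1.1 (by lia)).2 ⟨hw₁, hw₂⟩
    exact ⟨hw, (card_returns_eq_two_iff hw).2
      ⟨a + 1, hw₁.1.1.mem_returns_append (by lia), by lia⟩⟩
  · rintro ⟨w₁, w₂⟩ ⟨a, b, hm, hw₁, hw₂⟩ ⟨w₁', w₂'⟩ ⟨a', b', hm', hw₁', hw₂'⟩ heq
    simp only at heq hw₁ hw₂ hw₁' hw₂'
    have hw : w₁ ++ w₂ ∈ dyckRS (m + 2) r s :=
      (hw₁.1.1.append_mem_dyckRS_iff hw₂.1.1 (by lia)).2 ⟨hw₁, hw₂⟩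
    have hreturn : a' + 1 ∈ returns (m + 2) (w₁ ++ w₂) :=
      heq ▸ hw₁'.1.1.mem_returns_append (by lia)
    have haa' := eq_of_mem_returns_of_mem_dyckRS hw
      (hw₁.1.1.mem_returns_append (by lia)) (by lia) hreturn (by lia)
    have hlen : w₁.length = w₁'.length := by rw [hw₁.1.1.1, hw₁'.1.1.1, haa']
    obtain ⟨rfl, rfl⟩ := List.append_inj heq hlen
    rfl
  · rintro w ⟨hw, hcard⟩
    obtain ⟨k, hk, hkn⟩ := (card_returns_eq_two_iff hw).1 hcard
    obtain ⟨w₁, w₂, hw₁, hw₂, rfl⟩ := hw.1.exists_append_eq_of_mem_returns hk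
    obtain ⟨a, rfl⟩ := Nat.exists_eq_add_of_le' (bounds_of_mem_returns hk).1
    obtain ⟨b, hb⟩ := Nat.exists_eq_add_of_lt hkn
    rw [hb, add_assoc (a + 1), Nat.add_sub_cancel_left] at hw₂
    exact ⟨(w₁, w₂), ⟨a, b, by lia, (hw₁.append_mem_dyckRS_iff hw₂ (by lia)).1 hw⟩, rfl⟩

end Factorization

theorem exists_profile_true_eq {f : ℕ → ℕ} (hf : Monotone f) (k c : ℕ) (hc : ∀ i < k, f i ≤ c) :
    ∃ w : List Bool, w.count true = k ∧ w.count false = c ∧ ∀ i < k, profile true w i = f i := by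
  induction k generalizing c with
  | zero => exact ⟨List.replicate c false, by simp [List.count_replicate]⟩
  | succ k ih =>
    obtain ⟨w, htrue, hfalse, hprofile⟩ := ih (f k) fun i hi => hf hi.le
    refine ⟨w ++ true :: List.replicate (c - f k) false, ?_, ?_, fun i hi => ?_⟩
    · simp [htrue, List.count_replicate]
    · simp [hfalse, hc k k.lt_succ_self]
    · rcases Nat.lt_succ_iff_lt_or_eq.1 hi with hlt | rfl
      · rw [profile_append_left _ (htrue.symm ▸ hlt), hprofile i hlt]
      · have hlast := profile_append_right true w (true :: List.replicate (c - f i) false) 0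
        rw [htrue, add_zero, Bool.not_true, hfalse] at hlast
        rw [hlast, profile]
        simp

section Motzkin

variable {v : List (Option Bool)} {w w' : List Bool} {i t : ℕ}

theorem isMotzkinWord_iff_countBefore :
    IsMotzkinWord v ↔ v.count (some false) = v.count (some true) ∧
      ∀ k, v.countBefore (some false) k ≤ v.countBefore (some true) k := by
  simp only [IsMotzkinWord, List.countBefore_eq_count_take]
  refine and_congr_right fun _ => ⟨fun h k => h _ (List.take_prefix k v), fun h p hp => ?_⟩
  rw [List.prefix_iff_eq_take.1 hp]
  exact h p.length

/-- `v` encodes the Dyck path `w` of semilength `v.length + 1` when, for `i, p ≤ v.length`, the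
`i`-th `u` of `w` precedes its `p`-th `d` (both counted from `0`) exactly if the first `i` letters
of `v` contain at most as many down steps as its first `p` letters contain up steps. -/
structure Encodes (v : List (Option Bool)) (w : List Bool) : Prop where
  isDyckWord : IsDyckWord (v.length + 1) w
  profile_le_iff : ∀ i ≤ v.length, ∀ p,
    profile true w i ≤ p ↔ v.countBefore (some false) i ≤ v.countBefore (some true) p

theorem IsMotzkinWord.exists_encodes (hv : IsMotzkinWord v) : ∃ w, Encodes v w := by
  obtain ⟨-, hballot⟩ := isMotzkinWord_iff_countBefore.1 hv
  have hex (i : ℕ) : ∃ p, v.countBefore (some false) i ≤ v.countBefore (some true) p :=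
    ⟨i, hballot i⟩
  have hf (i p : ℕ) : Nat.find (hex i) ≤ p ↔
      v.countBefore (some false) i ≤ v.countBefore (some true) p := by
    rw [Nat.find_le_iff]
    exact ⟨fun ⟨q, hqp, hq⟩ => hq.trans (monotone_countBefore v _ hqp), fun h => ⟨p, le_rfl, h⟩⟩
  have hf_le (i : ℕ) : Nat.find (hex i) ≤ i := (hf i i).2 (hballot i)
  have hmono : Monotone fun i => Nat.find (hex i) := fun i j hij =>
    (hf i _).2 ((monotone_countBefore v _ hij).trans ((hf j _).1 le_rfl))
  obtain ⟨w, htrue, hfalse, hprofile⟩ := exists_profile_true_eq hmono (v.length + 1)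
    (v.length + 1) fun i hi => (hf_le i).trans hi.le
  refine ⟨w, isDyckWord_iff_profile.2 ⟨htrue, hfalse, fun i hi => ?_⟩, fun i hi p => ?_⟩
  · exact (hprofile i hi).trans_le (hf_le i)
  · rw [hprofile i (Nat.lt_succ_of_le hi)]
    exact hf i p

/-- The Motzkin path of a Dyck path `w` without stars: its `i`-th step is up if `sᵢ > 0`, down if
`rᵢ > 0`, and horizontal otherwise. -/
def motzkinCode (w : List Bool) : List (Option Bool) :=
  (List.range (w.count true - 1)).map fun t =>
    if 0 < sStat w (t + 1) then some true else if 0 < rStat w (t + 1) then some false else none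

namespace Encodes

theorem profile_true_le (h : Encodes v w) (hi : i ≤ v.length) : profile true w i ≤ i :=
  h.isDyckWord.profile_true_le (Nat.lt_succ_of_le hi)

theorem count_eq (h : Encodes v w) (x : Bool) : w.count x = v.length + 1 :=
  h.isDyckWord.count_eq x

protected theorem eq (h : Encodes v w) (h' : Encodes v w') : w = w' := by
  refine ext_profile_true (by rw [h.count_eq, h'.count_eq]) (by rw [h.count_eq, h'.count_eq]) ?_
  intro i hi
  rw [h.count_eq] at hi
  have hi' : i ≤ v.length := Nat.le_of_lt_succ hi
  refine eq_of_forall_ge_iff fun p => ?_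
  rw [h.profile_le_iff i hi', h'.profile_le_iff i hi']

theorem rStat_pos_iff (h : Encodes v w) (hv : IsMotzkinWord v) (ht : t < v.length) :
    0 < rStat w (t + 1) ↔ v[t]? = some (some false) := by
  have hsucc := countBefore_succ v (some false) t
  rw [rStat_succ_pos_iff (by rw [h.count_eq]; lia), ← not_le, h.profile_le_iff _ ht]
  constructor
  · intro hlt
    by_contra hne
    have := (h.profile_le_iff t ht.le _).1 le_rfl
    rw [if_neg hne] at hsucc
    lia
  · intro heq
    rw [if_pos heq] at hsucc
    have hle : v.countBefore (some false) t ≤ v.count (some true) :=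
      hv.1 ▸ List.countBefore_le_count
    have hlevel := countBefore_idxOfNth_of_le_count hle
    have hprofile := (h.profile_le_iff t ht.le _).2 hlevel.ge
    have := monotone_countBefore v (some true) hprofile
    lia

theorem sStat_pos_iff (h : Encodes v w) (hv : IsMotzkinWord v) (ht : t < v.length) :
    0 < sStat w (t + 1) ↔ v[t]? = some (some true) := by
  have hsucc := countBefore_succ v (some true) t
  have hbetween {i : ℕ} (hi : i ≤ v.length) : profile true w i = t + 1 ↔
      v.countBefore (some true) t < v.countBefore (some false) i ∧
        v.countBefore (some false) i ≤ v.countBefore (some true) (t + 1) := by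
    rw [← h.profile_le_iff i hi, ← not_le, ← h.profile_le_iff i hi]
    lia
  rw [sStat_succ_pos_iff (by rw [h.count_eq]; lia),
    profile_lt_profile_succ_iff (by rw [h.count_eq]; lia), Bool.not_false, h.count_eq]
  constructor
  · rintro ⟨i, hi, heq⟩
    have := (hbetween (Nat.le_of_lt_succ hi)).1 heq
    by_contra hne
    rw [if_neg hne] at hsucc
    lia
  · intro heq
    rw [if_pos heq] at hsucc
    have hle : v.countBefore (some true) (t + 1) ≤ v.count (some false) :=
      hv.1 ▸ List.countBefore_le_count
    have hlevel := countBefore_idxOfNth_of_le_count hle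
    have hidx_le := List.idxOfNth_le_length (xs := v) (x := some false)
      (n := v.countBefore (some true) (t + 1))
    exact ⟨_, Nat.lt_succ_of_le hidx_le, (hbetween hidx_le).2 (by lia)⟩

theorem mem_dyckL_one (h : Encodes v w) (hv : IsMotzkinWord v) : w ∈ dyckL (v.length + 1) 1 := by
  refine mem_dyckL_one_iff.2 ⟨h.isDyckWord, fun i hi hstar => ?_⟩
  obtain ⟨hi_pos, hi_le⟩ := Finset.mem_Icc.1 hi
  obtain ⟨t, rfl⟩ := Nat.exists_eq_add_of_le' hi_pos
  have hdown := (h.rStat_pos_iff hv hi_le).1 hstar.1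
  rw [(h.sStat_pos_iff hv hi_le).1 hstar.2] at hdown
  simp at hdown

theorem motzkinCode_eq (h : Encodes v w) (hv : IsMotzkinWord v) : motzkinCode w = v := by
  have hlen : (motzkinCode w).length = v.length := by
    rw [motzkinCode, List.length_map, List.length_range, h.count_eq, Nat.add_sub_cancel]
  refine List.ext_getElem hlen fun t _ ht => ?_
  simp only [motzkinCode, List.getElem_map, List.getElem_range, h.rStat_pos_iff hv ht,
    h.sStat_pos_iff hv ht, List.getElem?_eq_getElem ht, Option.some_inj]
  rcases v[t] with _ | _ | _ <;> rfl

theorem idxOf_false_eq (h : Encodes v w) : w.idxOf false = v.idxOf (some false) + 1 := by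
  have hzero : 0 < w.count false := (h.count_eq false).symm ▸ v.length.succ_pos
  have hascent : profile false w 0 ≤ v.length + 1 :=
    (profile_le_count ..).trans_eq (h.count_eq true)
  have hiff {i : ℕ} (hi : i ≤ v.length) : i < profile false w 0 ↔ i ≤ v.idxOf (some false) := by
    have hit : i < w.count true := (h.count_eq true).symm ▸ Nat.lt_succ_of_le hi
    have hle := h.profile_le_iff i hi 0
    rw [List.countBefore_zero, Nat.le_zero, Nat.le_zero, countBefore_eq_zero_iff hi] at hle
    rw [← hle, ← not_le, ← Bool.not_true, ← lt_profile_iff hit hzero, Nat.pos_iff_ne_zero, not_not]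
  rw [← h.isDyckWord.profile_false_zero]
  have hidx : v.idxOf (some false) ≤ v.length := List.idxOf_le_length
  have := (hiff hidx).2 le_rfl
  rcases hidx.lt_or_eq with hlt | heq
  · have := (hiff (i := v.idxOf (some false) + 1) hlt).not
    lia
  · lia

end Encodes

end Motzkin

section RevFlip

variable {v : List (Option Bool)}

/-- The path `v` traversed backwards, so that its up and down steps are exchanged. -/
def revFlip (v : List (Option Bool)) : List (Option Bool) := v.reverse.map (Option.map not)

theorem length_revFlip (v : List (Option Bool)) : (revFlip v).length = v.length := by
  rw [revFlip, List.length_map, List.length_reverse]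

theorem revFlip_revFlip (v : List (Option Bool)) : revFlip (revFlip v) = v := by
  have hnot : Option.map not ∘ Option.map not = id := by
    rw [Option.map_comp_map, Bool.involutive_not.comp_self, Option.map_id]
  rw [revFlip, revFlip, ← List.map_reverse, List.reverse_reverse, List.map_map, hnot, List.map_id]

theorem count_map_not (l : List (Option Bool)) (x : Bool) :
    (l.map (Option.map not)).count (some x) = l.count (some !x) := by
  have hinj := Option.map_injective Bool.involutive_not.injective
  have h := List.count_map_of_injective l _ hinj (some !x)
  rwa [Option.map_some, Bool.not_not] at h

theorem count_revFlip (v : List (Option Bool)) (x : Bool) :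
    (revFlip v).count (some x) = v.count (some !x) := by
  rw [revFlip, count_map_not, List.count_reverse]

theorem countBefore_revFlip (v : List (Option Bool)) (x : Bool) (k : ℕ) :
    (revFlip v).countBefore (some x) k =
      v.count (some !x) - v.countBefore (some !x) (v.length - k) := by
  have hsplit := congrArg (List.count (some !x)) (List.take_append_drop (v.length - k) v)
  rw [List.count_append] at hsplit
  rw [List.countBefore_eq_count_take, List.countBefore_eq_count_take, revFlip, ← List.map_take,
    count_map_not, List.take_reverse, List.count_reverse]
  lia

theorem IsMotzkinWord.revFlip (hv : IsMotzkinWord v) : IsMotzkinWord (revFlip v) := by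
  obtain ⟨hcount, hballot⟩ := isMotzkinWord_iff_countBefore.1 hv
  refine isMotzkinWord_iff_countBefore.2 ⟨?_, fun k => ?_⟩
  · rw [count_revFlip, count_revFlip]
    exact hcount.symm
  · have := hballot (v.length - k)
    rw [countBefore_revFlip, countBefore_revFlip, Bool.not_false, Bool.not_true]
    lia

end RevFlip

section StarlessMotzkin

variable {v : List (Option Bool)} {w : List Bool} {i m t : ℕ}

theorem Encodes.finalDescent_eq (h : Encodes v w) (hv : IsMotzkinWord v) :
    finalDescent w = (revFlip v).idxOf (some false) + 1 := by
  have hlast := h.profile_true_le le_rfl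
  have hidx : (revFlip v).idxOf (some false) ≤ v.length :=
    List.idxOf_le_length.trans_eq (length_revFlip v)
  have hiff {j : ℕ} (hj : j ≤ v.length) :
      j ≤ (revFlip v).idxOf (some false) ↔ profile true w v.length ≤ v.length - j := by
    rw [h.profile_le_iff _ le_rfl, List.countBefore_of_ge_length le_rfl, hv.1,
      ← countBefore_eq_zero_iff (hj.trans_eq (length_revFlip v).symm), countBefore_revFlip,
      Nat.sub_eq_zero_iff_le, Bool.not_false]
  have hle := (hiff hidx).1 le_rfl
  have hge := (hiff (Nat.sub_le v.length (profile true w v.length))).2 (by lia)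
  rw [h.isDyckWord.finalDescent_eq]
  lia

theorem length_motzkinCode (hw : IsDyckWord (m + 1) w) : (motzkinCode w).length = m := by
  rw [motzkinCode, List.length_map, List.length_range, hw.count_eq, Nat.add_sub_cancel]

theorem getElem?_motzkinCode (hw : IsDyckWord (m + 1) w) (ht : t < m) :
    (motzkinCode w)[t]? = some (if 0 < sStat w (t + 1) then some true
      else if 0 < rStat w (t + 1) then some false else none) := by
  rw [motzkinCode, List.getElem?_map, List.getElem?_range, Option.map_some]
  rwa [hw.count_eq, Nat.add_sub_cancel]

theorem getElem?_motzkinCode_eq_up_iff (hw : IsDyckWord (m + 1) w) (ht : t < m) :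
    (motzkinCode w)[t]? = some (some true) ↔ ∃ i ≤ m, profile true w i = t + 1 := by
  have hcount : t + 1 < w.count false := (hw.count_eq false).symm ▸ Nat.succ_lt_succ ht
  have hjump := profile_lt_profile_succ_iff hcount
  rw [← sStat_succ_pos_iff hcount, Bool.not_false, hw.count_eq] at hjump
  simp only [Nat.lt_succ_iff] at hjump
  rw [getElem?_motzkinCode hw ht, ← hjump]
  split_ifs with hs <;> simp [hs]

theorem getElem?_motzkinCode_eq_down_iff (hw : w ∈ dyckL (m + 1) 1) (ht : t < m) :
    (motzkinCode w)[t]? = some (some false) ↔ profile true w t < profile true w (t + 1) := by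
  obtain ⟨hdyck, hstar⟩ := mem_dyckL_one_iff.1 hw
  have hcount : t + 1 < w.count true := (hdyck.count_eq true).symm ▸ Nat.succ_lt_succ ht
  have hfree := hstar (t + 1) (Finset.mem_Icc.2 (by lia))
  rw [IsStar] at hfree
  rw [getElem?_motzkinCode hdyck ht, ← rStat_succ_pos_iff hcount]
  split_ifs with hs hr <;> simp only [Option.some_inj, reduceCtorEq] <;> lia

/-- By induction on `i`: the value of `profile true w` jumps at the down steps of the code, and
each of its nonzero values is one more than the index of an up step. -/
theorem countBefore_motzkinCode_profile (hw : w ∈ dyckL (m + 1) 1) (hi : i ≤ m) :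
    (motzkinCode w).countBefore (some true) (profile true w i) =
      (motzkinCode w).countBefore (some false) i := by
  have hdyck := hw.1
  induction i with
  | zero => rw [hdyck.profile_true_zero]; simp
  | succ i ih =>
    have hmono := monotone_profile true w
    have hprofile_le := hdyck.profile_true_le (Nat.lt_succ_of_le hi)
    rw [countBefore_succ, ← ih (Nat.le_of_succ_le hi)]
    simp only [getElem?_motzkinCode_eq_down_iff hw hi]
    rcases (hmono i.le_succ).eq_or_lt with heq | hlt
    · rw [heq, if_neg (lt_irrefl _), add_zero]
    · obtain ⟨t, ht⟩ := Nat.exists_eq_add_of_lt hlt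
      have hup := (getElem?_motzkinCode_eq_up_iff hdyck (t := profile true w i + t) (by lia)).2
        ⟨i + 1, hi, ht⟩
      rw [if_pos hlt, ht, countBefore_succ, if_pos hup]
      congr 1
      refine countBefore_eq_of_forall_ne (Nat.le_add_right ..) fun k hik hkt hk => ?_
      obtain ⟨j, -, hj⟩ := (getElem?_motzkinCode_eq_up_iff hdyck (by lia)).1 hk
      have hij : i < j := hmono.reflect_lt (by lia)
      have := hmono (Nat.succ_le_of_lt hij)
      lia

theorem encodes_motzkinCode (hw : w ∈ dyckL (m + 1) 1) : Encodes (motzkinCode w) w := by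
  have hdyck := hw.1
  have hlen := length_motzkinCode hdyck
  refine ⟨hlen.symm ▸ hdyck, fun i hi p => ?_⟩
  rw [hlen] at hi
  rw [← countBefore_motzkinCode_profile hw hi]
  refine ⟨fun h => monotone_countBefore _ _ h, fun h => ?_⟩
  by_contra! hlt
  obtain ⟨t, ht⟩ := Nat.exists_eq_add_of_lt hlt
  have hprofile_le := hdyck.profile_true_le (Nat.lt_succ_of_le hi)
  have hup := (getElem?_motzkinCode_eq_up_iff hdyck (t := p + t) (by lia)).2 ⟨i, hi, ht⟩
  rw [ht, countBefore_succ, if_pos hup] at h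
  have := monotone_countBefore (motzkinCode w) (some true) (Nat.le_add_right p t)
  lia

theorem isMotzkinWord_motzkinCode (hw : w ∈ dyckL (m + 1) 1) : IsMotzkinWord (motzkinCode w) := by
  have hlen := length_motzkinCode hw.1
  have hprofile := countBefore_motzkinCode_profile hw le_rfl
  have hballot {i : ℕ} (hi : i ≤ m) := countBefore_motzkinCode_profile hw hi ▸
    monotone_countBefore (motzkinCode w) (some true) (hw.1.profile_true_le (Nat.lt_succ_of_le hi))
  have hfalse : (motzkinCode w).countBefore (some false) m = _ :=
    List.countBefore_of_ge_length hlen.le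
  have htrue : (motzkinCode w).countBefore (some true) m = _ :=
    List.countBefore_of_ge_length hlen.le
  have hcount : (motzkinCode w).count (some false) = (motzkinCode w).count (some true) := by
    rw [← hfalse, ← htrue, ← hprofile]
    refine (countBefore_eq_of_forall_ne (hw.1.profile_true_le m.lt_succ_self) ?_).symm
    intro k hle hk hup
    obtain ⟨j, hj, heq⟩ := (getElem?_motzkinCode_eq_up_iff hw.1 hk).1 hup
    have := monotone_profile true w hj
    lia
  refine isMotzkinWord_iff_countBefore.2 ⟨hcount, fun k => ?_⟩
  rcases le_total k m with hk | hk
  · exact hballot hk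
  · rw [List.countBefore_of_ge_length (hlen.trans_le hk), hcount,
      List.countBefore_of_ge_length (hlen.trans_le hk)]

/-- Motzkin paths of length `m` whose first down step has index `k`, counted from `0`; for `k = m`,
those without a down step. -/
def firstDownMotzkin (m k : ℕ) : Set (List (Option Bool)) :=
  {v | v.length = m ∧ IsMotzkinWord v ∧ v.idxOf (some false) = k}

theorem injOn_motzkinCode (m : ℕ) : Set.InjOn motzkinCode (dyckL (m + 1) 1) :=
  fun _ hw _ hw' heq => (encodes_motzkinCode hw).eq (heq ▸ encodes_motzkinCode hw')

theorem bijOn_motzkinCode (m l : ℕ) :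
    Set.BijOn motzkinCode {w | w ∈ dyckL (m + 1) 1 ∧ w.idxOf false = l + 1}
      (firstDownMotzkin m l) := by
  refine ⟨fun w ⟨hw, hl⟩ => ?_, (injOn_motzkinCode m).mono fun w hw => hw.1, ?_⟩
  · refine ⟨length_motzkinCode hw.1, isMotzkinWord_motzkinCode hw, ?_⟩
    exact Nat.succ_injective ((encodes_motzkinCode hw).idxOf_false_eq.symm.trans hl)
  · rintro v ⟨rfl, hv, rfl⟩
    obtain ⟨w, h⟩ := hv.exists_encodes
    exact ⟨w, ⟨h.mem_dyckL_one hv, h.idxOf_false_eq⟩, h.motzkinCode_eq hv⟩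

theorem bijOn_revFlip_motzkinCode (m k : ℕ) :
    Set.BijOn (fun w => revFlip (motzkinCode w))
      {w | w ∈ dyckL (m + 1) 1 ∧ finalDescent w = k + 1} (firstDownMotzkin m k) := by
  refine ⟨fun w ⟨hw, hk⟩ => ?_, fun w hw w' hw' heq => ?_, ?_⟩
  · have hv := isMotzkinWord_motzkinCode hw
    refine ⟨(length_revFlip _).trans (length_motzkinCode hw.1), hv.revFlip, ?_⟩
    exact Nat.succ_injective (((encodes_motzkinCode hw).finalDescent_eq hv).symm.trans hk)
  · exact injOn_motzkinCode m hw.1 hw'.1 ((Function.LeftInverse.injective revFlip_revFlip) heq)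
  · rintro v ⟨rfl, hv, rfl⟩
    obtain ⟨w, h⟩ := hv.revFlip.exists_encodes
    refine ⟨w, ⟨length_revFlip v ▸ h.mem_dyckL_one hv.revFlip, ?_⟩, ?_⟩
    · rw [h.finalDescent_eq hv.revFlip, revFlip_revFlip]
    · exact (congrArg revFlip (h.motzkinCode_eq hv.revFlip)).trans (revFlip_revFlip v)

end StarlessMotzkin

section FirstOccurrence

variable {α : Type*} [BEq α] [LawfulBEq α] {p w y : List α} {d : α} {k : ℕ}

theorem notMem_take_of_le_idxOf (hk : k ≤ w.idxOf d) : d ∉ w.take k := by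
  rwa [← List.count_eq_zero, ← List.countBefore_eq_count_take,
    countBefore_eq_zero_iff (hk.trans List.idxOf_le_length)]

theorem idxOf_eq_iff_getElem? (hk : k ≠ w.length) :
    w.idxOf d = k ↔ w[k]? = some d ∧ ∀ j < k, w[j]? ≠ some d := by
  rcases hk.lt_or_gt with hlt | hgt
  · rw [List.idxOf, List.findIdx_eq hlt, List.getElem?_eq_getElem hlt, beq_iff_eq, Option.some_inj]
    refine and_congr_right fun _ => forall₂_congr fun j hj => ?_
    rw [List.getElem?_eq_getElem (hj.trans hlt), ne_eq, Option.some_inj, beq_eq_false_iff_ne]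
  · rw [List.getElem?_eq_none hgt.le]
    have := List.idxOf_le_length (l := w) (a := d)
    exact iff_of_false (by lia) (by simp)

theorem idxOf_append_eq_length (hp : d ∉ p) (hy : y.idxOf d = 0) :
    (p ++ y).idxOf d = p.length := by
  rw [List.idxOf_append_of_notMem hp, hy, add_zero]

theorem idxOf_append_append (hp : d ∉ p) (b : List α) (hy : y.idxOf d = 0) :
    (p ++ (b ++ y)).idxOf d = p.length + b.idxOf d := by
  rw [List.idxOf_append_of_notMem hp]
  by_cases hb : d ∈ b
  · rw [List.idxOf_append_of_mem hb]
  · rw [idxOf_append_eq_length hb hy, List.idxOf_of_notMem hb]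

theorem exists_append_eq_of_idxOf (v : List α) (d : α) :
    ∃ p y, p ++ y = v ∧ d ∉ p ∧ y.idxOf d = 0 := by
  have hp : d ∉ v.take (v.idxOf d) := notMem_take_of_le_idxOf le_rfl
  refine ⟨_, _, List.take_append_drop (v.idxOf d) v, hp, ?_⟩
  have happend := List.idxOf_append_of_notMem (l₂ := v.drop (v.idxOf d)) hp
  rw [List.take_append_drop, List.length_take_of_le List.idxOf_le_length] at happend
  lia

end FirstOccurrence

theorem pairwise_disjoint_firstDownMotzkin (k : ℕ) :
    Pairwise (Function.onFun Disjoint fun m => firstDownMotzkin m k) := fun _ _ hne =>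
  Set.disjoint_left.2 fun _ hv hv' => hne (hv.1.symm.trans hv'.1)

section Insertion

variable {b b' p x y y' : List (Option Bool)}

/-- Insert `b` into `a` just before the first down step of `a`, or at the end if there is none. -/
def insertBeforeDown (a b : List (Option Bool)) : List (Option Bool) :=
  a.take (a.idxOf (some false)) ++ (b ++ a.drop (a.idxOf (some false)))

theorem insertBeforeDown_append (hp : some false ∉ p) (hy : y.idxOf (some false) = 0)
    (b : List (Option Bool)) : insertBeforeDown (p ++ y) b = p ++ (b ++ y) := by
  rw [insertBeforeDown, idxOf_append_eq_length hp hy, List.take_left,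
    List.drop_left]

theorem isMotzkinWord_append_append_iff (hb : IsMotzkinWord b) :
    IsMotzkinWord (p ++ (b ++ y)) ↔ IsMotzkinWord (p ++ y) := by
  obtain ⟨hcount, hballot⟩ := isMotzkinWord_iff_countBefore.1 hb
  have happend := forall_countBefore_append_le_iff (x := some false) (y := some true) (m := 0)
    (n := 0)
  simp only [zero_add] at happend
  simp only [isMotzkinWord_iff_countBefore, List.count_append, happend,
    forall_countBefore_append_le_iff]
  refine and_congr (by lia) (and_congr_right fun hp => ?_)
  have hp_count := hp p.length
  rw [List.countBefore_eq_count_take, List.countBefore_eq_count_take, List.take_length] at hp_count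
  constructor
  · rintro ⟨-, hy⟩ k
    have := hy k
    lia
  · refine fun hy => ⟨fun k => add_le_add hp_count (hballot k), fun k => ?_⟩
    have := hy k
    lia

theorem eq_nil_of_isMotzkinWord_append (hb : IsMotzkinWord b) (hbx : IsMotzkinWord (b ++ x))
    (hx : x.idxOf (some false) = 0) : x = [] := by
  rcases (List.idxOf_eq_zero_iff_eq_nil_or_head_eq _).1 hx with hnil | hhead
  · exact hnil
  · obtain ⟨x, rfl⟩ := List.head?_eq_some_iff.1 hhead
    have hprefix := hbx.2 (b ++ [some false]) ⟨x, by simp⟩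
    have := hb.1
    simp only [List.count_append] at hprefix
    simp at hprefix
    lia

theorem eq_of_append_eq_append (hb : IsMotzkinWord b) (hb' : IsMotzkinWord b')
    (hy : y.idxOf (some false) = 0) (hy' : y'.idxOf (some false) = 0)
    (heq : b ++ y = b' ++ y') : b = b' := by
  have hzero {e z : List (Option Bool)} (hz : (e ++ z).idxOf (some false) = 0) :
      e.idxOf (some false) = 0 := by
    by_cases he : some false ∈ e
    · rwa [List.idxOf_append_of_mem he] at hz
    · rw [List.idxOf_append_of_notMem he] at hz
      rw [List.idxOf_of_notMem he]
      lia
  rcases List.append_eq_append_iff.1 heq with ⟨e, rfl, rfl⟩ | ⟨e, rfl, rfl⟩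
  · rw [eq_nil_of_isMotzkinWord_append hb hb' (hzero hy), List.append_nil]
  · rw [eq_nil_of_isMotzkinWord_append hb' hb (hzero hy'), List.append_nil]

theorem exists_isMotzkinWord_append_eq (hx : x.count (some true) ≤ x.count (some false)) :
    ∃ b y, b ++ y = x ∧ IsMotzkinWord b ∧ y.idxOf (some false) = 0 := by
  by_cases hballot : ∀ k, x.countBefore (some false) k ≤ x.countBefore (some true) k
  · have hle := hballot x.length
    simp only [List.countBefore_eq_count_take, List.take_length] at hle
    exact ⟨x, [], List.append_nil x,
      isMotzkinWord_iff_countBefore.2 ⟨hle.antisymm hx, hballot⟩, rfl⟩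
  obtain ⟨k, hk, hmin⟩ : ∃ k, x.countBefore (some true) k < x.countBefore (some false) k ∧
      ∀ j < k, x.countBefore (some false) j ≤ x.countBefore (some true) j := by
    have hex : ∃ k, x.countBefore (some true) k < x.countBefore (some false) k := by
      simpa only [not_forall, not_le] using hballot
    exact ⟨Nat.find hex, Nat.find_spec hex, fun j hj => not_lt.1 (Nat.find_min hex hj)⟩
  obtain ⟨k, rfl⟩ : ∃ j, k = j + 1 := Nat.exists_eq_succ_of_ne_zero fun h => by
    subst h
    simp [List.countBefore_eq_count_take] at hk
  have hle := hmin k k.lt_succ_self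
  rw [countBefore_succ, countBefore_succ] at hk
  have hdown : x[k]? = some (some false) := by
    by_contra hne
    rw [if_neg hne] at hk
    lia
  rw [hdown, if_pos rfl, if_neg (by decide)] at hk
  have hcount : x.countBefore (some false) k = x.countBefore (some true) k := by lia
  refine ⟨x.take k, x.drop k, List.take_append_drop k x,
    isMotzkinWord_iff_countBefore.2 ⟨?_, fun j => ?_⟩, ?_⟩
  · simpa only [List.countBefore_eq_count_take] using hcount
  · have := hmin (min j k) (by lia)
    simpa only [List.countBefore_eq_count_take, List.take_take] using this
  · rw [List.idxOf_eq_zero_iff_eq_nil_or_head_eq, List.head?_drop, hdown]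
    exact Or.inr rfl

end Insertion

theorem bijOn_insertBeforeDown (k l m : ℕ) :
    Set.BijOn (fun p : List (Option Bool) × List (Option Bool) => insertBeforeDown p.1 p.2)
      (gradedProd (fun a => firstDownMotzkin a k) (fun b => firstDownMotzkin b l) m)
      (firstDownMotzkin m (k + l)) := by
  refine ⟨?_, ?_, ?_⟩
  · rintro ⟨a, b⟩ ⟨-, -, rfl, ⟨rfl, ha, hk⟩, rfl, hb, rfl⟩
    simp only at ha hk hb ⊢
    obtain ⟨p, y, rfl, hp, hy⟩ := exists_append_eq_of_idxOf a (some false)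
    rw [idxOf_append_eq_length hp hy] at hk
    subst hk
    rw [insertBeforeDown_append hp hy]
    refine ⟨?_, (isMotzkinWord_append_append_iff hb).2 ha, idxOf_append_append hp b hy⟩
    simp only [List.length_append]
    lia
  · rintro ⟨a, b⟩ ⟨-, -, -, ⟨-, -, hk⟩, -, hb, -⟩ ⟨a', b'⟩ ⟨-, -, -, ⟨-, -, hk'⟩, -, hb', -⟩ heq
    simp only at hk hk' hb hb' heq
    obtain ⟨p, y, rfl, hp, hy⟩ := exists_append_eq_of_idxOf a (some false)
    obtain ⟨p', y', rfl, hp', hy'⟩ := exists_append_eq_of_idxOf a' (some false)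
    rw [insertBeforeDown_append hp hy, insertBeforeDown_append hp' hy'] at heq
    rw [idxOf_append_eq_length hp hy] at hk
    rw [idxOf_append_eq_length hp' hy'] at hk'
    obtain ⟨rfl, htail⟩ := List.append_inj heq (hk.trans hk'.symm)
    obtain rfl := eq_of_append_eq_append hb hb' hy hy' htail
    rw [List.append_cancel_left htail]
  · rintro v ⟨rfl, hv, hkl⟩
    have hk : k ≤ v.idxOf (some false) := hkl ▸ Nat.le_add_right k l
    have hp : some false ∉ v.take k := notMem_take_of_le_idxOf hk
    have hlen : (v.take k).length = k := List.length_take_of_le (hk.trans List.idxOf_le_length)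
    have hdrop : (v.drop k).count (some true) ≤ (v.drop k).count (some false) := by
      have hcount := hv.1
      rw [← List.take_append_drop k v, List.count_append, List.count_append,
        List.count_eq_zero.2 hp] at hcount
      lia
    obtain ⟨b, y, hby, hb, hy⟩ := exists_isMotzkinWord_append_eq hdrop
    have hsplit : v.take k ++ (b ++ y) = v := hby ▸ List.take_append_drop k v
    generalize v.take k = p at hp hlen hsplit
    subst hlen hsplit
    rw [idxOf_append_append hp b hy] at hkl
    refine ⟨(p ++ y, b), ⟨_, _, ?_, ⟨rfl, (isMotzkinWord_append_append_iff hb).1 hv,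
      idxOf_append_eq_length hp hy⟩, rfl, hb, Nat.add_left_cancel hkl⟩,
      insertBeforeDown_append hp hy b⟩
    simp only [List.length_append]
    lia

theorem firstDownMotzkin_self (m : ℕ) : firstDownMotzkin m m = {List.replicate m none} := by
  refine Set.eq_singleton_iff_unique_mem.2 ⟨⟨List.length_replicate, ?_, ?_⟩, ?_⟩
  · have hcount (k : ℕ) (b : Bool) : (List.replicate k none).count (some b) = 0 :=
      List.count_eq_zero.2 fun h => Option.some_ne_none b (List.eq_of_mem_replicate h)
    simp only [isMotzkinWord_iff_countBefore, List.countBefore_eq_count_take, List.take_replicate,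
      hcount, le_refl, implies_true, and_self]
  · rw [List.idxOf_of_notMem fun h => Option.some_ne_none false (List.eq_of_mem_replicate h),
      List.length_replicate]
  · rintro v ⟨rfl, hv, hidx⟩
    have hfalse : some false ∉ v := List.idxOf_eq_length_iff.1 hidx
    have htrue : some true ∉ v := by
      rwa [← List.count_eq_zero, ← hv.1, List.count_eq_zero]
    refine List.eq_replicate_iff.2 ⟨rfl, ?_⟩
    rintro (_ | _ | _) hx
    exacts [rfl, absurd hx hfalse, absurd hx htrue]

theorem motzkinBallot_eq_ncard (m k : ℕ) :
    motzkinBallot m (k + 1) = (firstDownMotzkin m k).ncard := by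
  have hgetD (v : List (Option Bool)) (j : ℕ) :
      v.getD j none = some false ↔ v[j]? = some (some false) := by
    rw [List.getD_eq_getElem?_getD]
    cases v[j]? <;> simp
  rw [motzkinBallot]
  split_ifs with hmk
  · rw [Nat.succ_injective hmk, firstDownMotzkin_self, Set.ncard_singleton]
  · congr 1
    ext v
    refine and_congr_right fun hlen => and_congr_right fun _ => ?_
    have hk : k ≠ v.length := by lia
    simp only [idxOf_eq_iff_getElem? hk, Nat.add_sub_cancel, hgetD, ne_eq]

/-- **Lemma.** For `r, s ≥ 1` and `n ≥ r + s`, the number of Dyck paths in `𝒟ₙ^{r,s}`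
with exactly two returns is `T_{n-2, r+s-1}`. -/
theorem dyckRS_two_returns_count (r s n : ℕ) (hr : 1 ≤ r) (hs : 1 ≤ s) (hn : r + s ≤ n) :
    {w | w ∈ dyckRS n r s ∧ (returns n w).card = 2}.ncard =
      motzkinBallot (n - 2) (r + s - 1) := by
  obtain ⟨k, rfl⟩ := Nat.exists_eq_add_of_le' hr
  obtain ⟨l, rfl⟩ := Nat.exists_eq_add_of_le' hs
  obtain ⟨m, rfl⟩ : ∃ m, n = m + 2 := Nat.exists_eq_add_of_le' (by lia)
  rw [Nat.add_sub_cancel, show k + 1 + (l + 1) - 1 = k + l + 1 by lia, motzkinBallot_eq_ncard,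
    ← (bijOn_append_dyckRS (k + 1) (l + 1) m).ncard_eq,
    (bijOn_prodMap_gradedProd (bijOn_revFlip_motzkinCode · k) (bijOn_motzkinCode · l)
      (pairwise_disjoint_firstDownMotzkin k) m).ncard_eq,
    (bijOn_insertBeforeDown k l m).ncard_eq]
end
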